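/- arXiv:2312.05659 — 2 statements merged into one kernel-verified Lean document; each statement's English description precedes it below -/
import Mathlib

section
/- Let ε > 0, let Y ⊆ ℝ be a finite set of input labels with |Y| ≥ 2, let g : ℝ × ℝ → ℝ be a loss such that g(·, y) is convex for every y ∈ Y, and let P be a prior on Y. Then for every ε-DP unbiased label randomizer M⁰ on Y with finitely many output labels, there exists an ε-DP unbiased label randomizer M on Y with output labels ŷ_1 ≤ ... ≤ ŷ_m such that: (1) G(M;P) ≤ G(M⁰;P); (2) every column of M is nonzero and, writing q_i = min_{y∈Y} M_{y→i}, every entry satisfies M_{y→i} ∈ {q_i, e^ε·q_i}, with both values attained by some input label (so each column consists only of 'U' entries equal to e^ε·q_i and 'L' entries equal to q_i, with at least one of each); (3) for every i, the set T(i) := {y ∈ Y : M_{y→i} = e^ε·q_i} is a contiguous interval of Y with respect to the ordering of Y as real numbers (each column matches the pattern L*U+L*); (4) writing Φ₁(i) = min T(i) and Φ₂(i) = max T(i), for all i < i' one has Φ₁(i) ≤ Φ₁(i') and Φ₂(i) ≤ Φ₂(i'), with at least one of the two inequalities strict. -/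
open MeasureTheory

namespace LR

lemma exists_subgrad {φ : ℝ → ℝ} (hφ : ConvexOn ℝ Set.univ φ) (α : ℝ) :
    ∃ σ, ∀ s, φ α + σ * (s - α) ≤ φ s := by
  refine ⟨derivWithin φ (Set.Ioi α) α, fun s => ?_⟩
  rcases lt_trichotomy s α with h | h | h
  · have h1 := hφ.slope_le_leftDeriv_of_mem_interior (x := s) (y := α) (by simp) (by simp) h
    have h2 := hφ.leftDeriv_le_rightDeriv_of_mem_interior (x := α) (by simp)
    have h3 := h1.trans h2
    rw [slope_def_field, div_le_iff₀ (by linarith)] at h3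
    nlinarith
  · subst h; simp
  · have h1 := hφ.rightDeriv_le_slope_of_mem_interior (x := α) (y := s) (by simp) (by simp) h
    rw [slope_def_field, le_div_iff₀ (by linarith)] at h1
    nlinarith

/-- A line crossing a convex function at `α ≤ β`. -/
lemma exists_line {φ : ℝ → ℝ} (hφ : ConvexOn ℝ Set.univ φ) {α β : ℝ} (hab : α ≤ β) :
    ∃ σ, (∀ s, s ≤ α ∨ β ≤ s → φ α + σ * (s - α) ≤ φ s) ∧
      (∀ s, α ≤ s → s ≤ β → φ s ≤ φ α + σ * (s - α)) := by
  rcases hab.eq_or_lt with h | h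
  · subst h
    obtain ⟨σ, hσ⟩ := exists_subgrad hφ α
    refine ⟨σ, fun s _ => hσ s, fun s h1 h2 => ?_⟩
    have : s = α := le_antisymm h2 h1
    subst this; simp
  · have hba : 0 < β - α := by linarith
    refine ⟨(φ β - φ α) / (β - α), ?_, ?_⟩
    · rintro s (hs | hs)
      · rcases hs.eq_or_lt with rfl | hs
        · simp
        have := hφ.slope_mono_adjacent (Set.mem_univ s) (Set.mem_univ β) hs h
        rw [div_le_iff₀ (by linarith)] at this
        nlinarith
      · rcases hs.eq_or_lt with rfl | hs
        · rw [div_mul_cancel₀ _ hba.ne']; linarith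
        have := hφ.slope_mono_adjacent (Set.mem_univ α) (Set.mem_univ s) h hs
        rw [le_div_iff₀ (by linarith)] at this
        have e : (φ β - φ α) / (β - α) * (β - α) = φ β - φ α := div_mul_cancel₀ _ hba.ne'
        nlinarith
    · intro s h1 h2
      rcases h1.eq_or_lt with rfl | h1
      · simp
      rcases h2.eq_or_lt with rfl | h2
      · rw [div_mul_cancel₀ _ hba.ne']; linarith
      have := hφ.secant_mono_aux2 (Set.mem_univ α) (Set.mem_univ β) h1 h2
      rw [div_le_iff₀ (by linarith)] at this
      linarith

lemma exchange {J : Type*} [Fintype J] (d x : J → ℝ) (h0 : ∑ j, d j = 0)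
    (h1 : ∑ j, d j * x j = 0) {φ : ℝ → ℝ} (hφ : ConvexOn ℝ Set.univ φ) {α β : ℝ} (hab : α ≤ β)
    (hl : ∀ j, x j < α → 0 ≤ d j) (hr : ∀ j, β < x j → 0 ≤ d j)
    (hm : ∀ j, α < x j → x j < β → d j ≤ 0) : 0 ≤ ∑ j, d j * φ (x j) := by
  obtain ⟨σ, hs1, hs2⟩ := exists_line hφ hab
  have e : ∑ j, d j * φ (x j) = ∑ j, d j * (φ (x j) - (φ α + σ * (x j - α))) := by
    have : ∑ j, d j * (φ (x j) - (φ α + σ * (x j - α)))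
        = ∑ j, d j * φ (x j) - (φ α - σ * α) * ∑ j, d j - σ * ∑ j, d j * x j := by
      rw [Finset.mul_sum, Finset.mul_sum, ← Finset.sum_sub_distrib, ← Finset.sum_sub_distrib]
      exact Finset.sum_congr rfl fun j _ => by ring
    rw [this, h0, h1]; ring
  rw [e]
  refine Finset.sum_nonneg fun j _ => ?_
  rcases lt_trichotomy (x j) α with h | h | h
  · exact mul_nonneg (hl j h) (by linarith [hs1 (x j) (Or.inl h.le)])
  · simp [h]
  rcases lt_trichotomy (x j) β with h' | h' | h'
  · exact mul_nonneg_of_nonpos_of_nonpos (hm j h h') (by linarith [hs2 (x j) h.le h'.le])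
  · have a := hs1 (x j) (Or.inr h'.ge)
    have b := hs2 (x j) h.le h'.le
    have : φ (x j) - (φ α + σ * (x j - α)) = 0 := by linarith
    simp [this]
  · exact mul_nonneg (hr j h') (by linarith [hs1 (x j) (Or.inr h'.le)])

lemma pivot {J : Type*} [Fintype J] (d x : J → ℝ) (h0 : ∑ j, d j = 0)
    (h : ∀ j k, d j < 0 → 0 < d k → x j ≤ x k) : 0 ≤ ∑ j, d j * x j := by
  classical
  by_cases hn : (Finset.univ.filter fun j => d j < 0).Nonempty
  · obtain ⟨p, hp, hmax⟩ := Finset.exists_max_image _ x hn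
    have e : ∑ j, d j * x j = ∑ j, d j * (x j - x p) := by
      have : ∑ j, d j * (x j - x p) = ∑ j, d j * x j - x p * ∑ j, d j := by
        rw [Finset.mul_sum, ← Finset.sum_sub_distrib]
        exact Finset.sum_congr rfl fun j _ => by ring
      rw [this, h0]; ring
    rw [e]
    refine Finset.sum_nonneg fun j _ => ?_
    rcases lt_trichotomy (d j) 0 with hj | hj | hj
    · exact mul_nonneg_of_nonpos_of_nonpos hj.le
        (by linarith [hmax j (by simpa using hj)])
    · simp [hj]
    · exact mul_nonneg hj.le (by linarith [h p j (by simpa using hp) hj])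
  · have hd : ∀ j, 0 ≤ d j := by
      intro j; by_contra hj; exact hn ⟨j, by simpa using hj⟩
    have := (Finset.sum_eq_zero_iff_of_nonneg (fun j _ => hd j)).1 h0
    exact (Finset.sum_eq_zero fun j hj => by rw [this j hj]; ring).ge

/-- Splitting an interval of the line according to the pattern of sets containing a point. -/
lemma split_sum {ι : Type*} [Fintype ι] [DecidableEq ι] (τ : ℝ → Finset ι)
    (hτ : ∀ y, MeasurableSet {u | y ∈ τ u}) (S : Set ℝ) (hS : volume S ≠ ⊤) (hSm : MeasurableSet S) :
    (∀ T, MeasurableSet (τ ⁻¹' {T})) ∧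
    (∑ T, volume.real (S ∩ τ ⁻¹' {T}) = volume.real S) ∧
    ∀ y, ∑ T, (if y ∈ T then volume.real (S ∩ τ ⁻¹' {T}) else 0) =
      volume.real (S ∩ {u | y ∈ τ u}) := by
  have hm : ∀ T : Finset ι, MeasurableSet (τ ⁻¹' {T}) := by
    intro T
    have : τ ⁻¹' {T} = ⋂ y, {u | y ∈ τ u ↔ y ∈ T} := by
      ext u; simp [Finset.ext_iff]
    rw [this]
    refine MeasurableSet.iInter fun y => ?_
    by_cases hy : y ∈ T
    · simpa [hy] using hτ y
    · simp only [hy, iff_false]; exact (hτ y).compl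
  have : IsFiniteMeasure (volume.restrict S) := ⟨by simpa using hS.lt_top⟩
  have key : ∀ F : Finset (Finset ι), ∑ T ∈ F, volume.real (S ∩ τ ⁻¹' {T}) =
      volume.real (S ∩ τ ⁻¹' F) := by
    intro F
    have := sum_measureReal_preimage_singleton (μ := volume.restrict S) F (f := τ)
      (fun y _ => hm y)
    simp only [measureReal_restrict_apply' hSm] at this
    simpa [Set.inter_comm] using this
  refine ⟨hm, ?_, ?_⟩
  · rw [key]; simp
  · intro y
    rw [← Finset.sum_filter, key]
    congr 1; ext u; simp

def cf {ι : Type} [DecidableEq ι] (E : ℝ) (y : ι) (T : Finset ι) : ℝ := if y ∈ T then E else 1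

structure Feas {ι : Type} [Fintype ι] [DecidableEq ι] {J : Type} [Fintype J]
    (E : ℝ) (v P : ι → ℝ) (g : ι → ℝ → ℝ) (lo hi G0 : ℝ)
    (τ : J → Finset ι) (k x : J → ℝ) : Prop where
  nonneg : ∀ j, 0 ≤ k j
  sum : ∀ y, ∑ j, k j * cf E y (τ j) = 1
  mean : ∀ y, ∑ j, k j * cf E y (τ j) * x j = v y
  hlo : ∀ j, lo ≤ x j
  hhi : ∀ j, x j ≤ hi
  loss : ∑ y, P y * ∑ j, k j * cf E y (τ j) * g y (x j) ≤ G0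

def QQ {ι : Type} [Fintype ι] [DecidableEq ι] {J : Type} [Fintype J] (E : ℝ)
    (τ : J → Finset ι) (k x : J → ℝ) : ℝ := ∑ y, ∑ j, k j * cf E y (τ j) * x j ^ 2

lemma cf_pos {ι : Type} [DecidableEq ι] {E : ℝ} (hE : 0 < E) (y : ι) (T : Finset ι) :
    0 < cf E y T := by
  unfold cf; split_ifs <;> linarith

lemma merge {ι : Type} [Fintype ι] [DecidableEq ι] {J : Type} [Fintype J]
    {E : ℝ} (hE : 0 < E) {v P : ι → ℝ} (hP : ∀ y, 0 ≤ P y) {g : ι → ℝ → ℝ}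
    (hg : ∀ y, ConvexOn ℝ Set.univ (g y)) {lo hi G0 : ℝ} (hlh : lo ≤ hi)
    {τ : J → Finset ι} {k x : J → ℝ} (hF : Feas E v P g lo hi G0 τ k x) :
    ∃ k' x' : Finset ι → ℝ, Feas E v P g lo hi G0 id k' x' ∧
      QQ E id k' x' ≤ QQ E τ k x ∧ ∑ T, k' T = ∑ j, k j ∧
      (∀ T, k' T = ∑ j with τ j = T, k j) ∧
      (∀ T, k' T * x' T = ∑ j with τ j = T, k j * x j) ∧
      (Nonempty ι → ∀ i j, 0 < k i → 0 < k j → τ i = τ j → x i ≠ x j →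
        QQ E id k' x' < QQ E τ k x) := by
  set k' : Finset ι → ℝ := fun T => ∑ j with τ j = T, k j with hk'
  set x' : Finset ι → ℝ := fun T =>
    if k' T = 0 then lo else (∑ j with τ j = T, k j * x j) / k' T with hx'
  have hk'0 : ∀ T, 0 ≤ k' T := fun T => Finset.sum_nonneg fun j _ => hF.nonneg j
  have hz : ∀ T, k' T = 0 → ∀ j, τ j = T → k j = 0 := fun T hT j hj =>
    (Finset.sum_eq_zero_iff_of_nonneg (fun j _ => hF.nonneg j)).1 hT j (by simpa using hj)
  have hkx : ∀ T, k' T * x' T = ∑ j with τ j = T, k j * x j := by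
    intro T
    by_cases hT : k' T = 0
    · rw [hT, zero_mul, Finset.sum_eq_zero]
      intro j hj
      rw [hz T hT j (by simpa using hj), zero_mul]
    · simp only [hx', hT, if_false]; field_simp
  have hsum : ∀ F : Finset ι → ℝ, ∑ T, k' T * F T = ∑ j, k j * F (τ j) := by
    intro F
    rw [← Finset.sum_fiberwise Finset.univ τ (fun j => k j * F (τ j))]
    refine Finset.sum_congr rfl fun T _ => ?_
    rw [hk', Finset.sum_mul]
    refine Finset.sum_congr rfl fun j hj => ?_
    rw [(Finset.mem_filter.1 hj).2]
  have hsumx : ∀ F : Finset ι → ℝ, ∑ T, k' T * F T * x' T = ∑ j, k j * F (τ j) * x j := by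
    intro F
    rw [← Finset.sum_fiberwise Finset.univ τ (fun j => k j * F (τ j) * x j)]
    refine Finset.sum_congr rfl fun T _ => ?_
    rw [mul_right_comm, hkx, Finset.sum_mul]
    refine Finset.sum_congr rfl fun j hj => ?_
    rw [(Finset.mem_filter.1 hj).2]; ring
  have hjen : ∀ (φ : ℝ → ℝ), ConvexOn ℝ Set.univ φ → ∀ T,
      k' T * φ (x' T) ≤ ∑ j with τ j = T, k j * φ (x j) := by
    intro φ hφ T
    by_cases hT : k' T = 0
    · rw [hT, zero_mul, Finset.sum_eq_zero]
      intro j hj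
      rw [hz T hT j (by simpa using hj), zero_mul]
    · obtain ⟨σ, hσ⟩ := exists_subgrad hφ (x' T)
      have : ∑ j with τ j = T, k j * (φ (x' T) + σ * (x j - x' T)) ≤
          ∑ j with τ j = T, k j * φ (x j) :=
        Finset.sum_le_sum fun j _ => mul_le_mul_of_nonneg_left (hσ _) (hF.nonneg j)
      have e : ∑ j with τ j = T, k j * (φ (x' T) + σ * (x j - x' T)) =
          k' T * φ (x' T) + σ * (k' T * x' T) - σ * (k' T * x' T) := by
        nth_rewrite 1 [hkx]
        rw [hk', Finset.sum_mul, Finset.sum_mul, Finset.mul_sum, Finset.mul_sum,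
          ← Finset.sum_add_distrib, ← Finset.sum_sub_distrib]
        exact Finset.sum_congr rfl fun j _ => by ring
      linarith
  have hjen' : ∀ (φ : ℝ → ℝ), ConvexOn ℝ Set.univ φ → ∀ y,
      ∑ T, k' T * cf E y T * φ (x' T) ≤ ∑ j, k j * cf E y (τ j) * φ (x j) := by
    intro φ hφ y
    rw [← Finset.sum_fiberwise Finset.univ τ (fun j => k j * cf E y (τ j) * φ (x j))]
    refine Finset.sum_le_sum fun T _ => ?_
    have := mul_le_mul_of_nonneg_right (hjen φ hφ T) (cf_pos hE y T).le
    rw [mul_right_comm]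
    refine this.trans (le_of_eq ?_)
    rw [Finset.sum_mul]
    refine Finset.sum_congr rfl fun j hj => ?_
    rw [(Finset.mem_filter.1 hj).2]; ring
  have hsq : ConvexOn ℝ Set.univ (fun s : ℝ => s ^ 2) := even_two.convexOn_pow
  refine ⟨k', x', ⟨hk'0, fun y => ?_, fun y => ?_, fun T => ?_, fun T => ?_, ?_⟩, ?_, ?_,
    fun T => rfl, hkx, ?_⟩
  · simpa using (hsum (cf E y)).trans (hF.sum y)
  · simpa using (hsumx (cf E y)).trans (hF.mean y)
  · by_cases hT : k' T = 0
    · simp [hx', hT]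
    · have h0 := lt_of_le_of_ne (hk'0 T) (Ne.symm hT)
      have : k' T * lo ≤ k' T * x' T := by
        rw [hkx, hk', Finset.sum_mul]
        exact Finset.sum_le_sum fun j _ => mul_le_mul_of_nonneg_left (hF.hlo j) (hF.nonneg j)
      exact le_of_mul_le_mul_left this h0
  · by_cases hT : k' T = 0
    · simp [hx', hT, hlh]
    · have h0 := lt_of_le_of_ne (hk'0 T) (Ne.symm hT)
      have : k' T * x' T ≤ k' T * hi := by
        rw [hkx, hk', Finset.sum_mul]
        exact Finset.sum_le_sum fun j _ => mul_le_mul_of_nonneg_left (hF.hhi j) (hF.nonneg j)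
      exact le_of_mul_le_mul_left this h0
  · refine le_trans ?_ hF.loss
    exact Finset.sum_le_sum fun y _ => mul_le_mul_of_nonneg_left (hjen' _ (hg y) y) (hP y)
  · exact Finset.sum_le_sum fun y _ => hjen' _ hsq y
  · simpa using hsum (fun _ => 1)
  · rintro ⟨y0⟩ i j hi hj hij hne
    refine Finset.sum_lt_sum (fun y _ => hjen' _ hsq y) ⟨y0, Finset.mem_univ _, ?_⟩
    rw [← Finset.sum_fiberwise Finset.univ τ (fun j => k j * cf E y0 (τ j) * x j ^ 2)]
    have fib : ∀ T, ∑ j with τ j = T, k j * cf E y0 (τ j) * x j ^ 2 =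
        k' T * cf E y0 T * x' T ^ 2 + cf E y0 T * ∑ j with τ j = T, k j * (x j - x' T) ^ 2 := by
      intro T
      have e : ∑ j with τ j = T, k j * (x j - x' T) ^ 2 =
          ∑ j with τ j = T, k j * x j ^ 2 - 2 * x' T * (k' T * x' T) + k' T * x' T ^ 2 := by
        rw [hkx, hk', Finset.mul_sum, Finset.sum_mul, ← Finset.sum_sub_distrib,
          ← Finset.sum_add_distrib]
        exact Finset.sum_congr rfl fun j _ => by ring
      rw [e]
      have : ∑ j with τ j = T, k j * cf E y0 (τ j) * x j ^ 2 =
          cf E y0 T * ∑ j with τ j = T, k j * x j ^ 2 := by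
        rw [Finset.mul_sum]
        refine Finset.sum_congr rfl fun j hj => ?_
        rw [(Finset.mem_filter.1 hj).2]; ring
      rw [this]; ring
    have nn : ∀ T, ∀ l, 0 ≤ k l * (x l - x' T) ^ 2 := fun T l =>
      mul_nonneg (hF.nonneg l) (sq_nonneg _)
    refine Finset.sum_lt_sum (fun T _ => ?_) ⟨τ i, Finset.mem_univ _, ?_⟩
    · rw [fib]
      have := mul_nonneg (cf_pos hE y0 T).le (Finset.sum_nonneg fun l (_ : l ∈ Finset.univ.filter
        (fun j => τ j = T)) => nn T l)
      simp only [id]; linarith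
    · rw [fib]
      have : 0 < ∑ l with τ l = τ i, k l * (x l - x' (τ i)) ^ 2 := by
        by_cases hxi : x i = x' (τ i)
        · refine Finset.sum_pos' (fun l _ => nn _ l) ⟨j, by simp [hij], ?_⟩
          refine mul_pos hj (lt_of_le_of_ne (sq_nonneg _) (Ne.symm (pow_ne_zero 2 ?_)))
          exact sub_ne_zero.2 fun h => hne (hxi.trans h.symm)
        · refine Finset.sum_pos' (fun l _ => nn _ l) ⟨i, by simp, ?_⟩
          refine mul_pos hi (lt_of_le_of_ne (sq_nonneg _) (Ne.symm (pow_ne_zero 2 ?_)))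
          exact sub_ne_zero.2 hxi
      have := mul_pos (cf_pos hE y0 (τ i)) this
      simp only [id]; linarith

lemma exists_cells : ∀ (N : ℕ) (k : Fin N → ℝ), (∀ j, 0 ≤ k j) →
    ∃ a : Fin N → ℝ, (∀ i j, i < j → a i + k i ≤ a j) ∧ (∀ i, 0 ≤ a i) ∧ (∀ i, a i + k i ≤ ∑ j, k j) ∧
      ∀ B : Set ℝ, MeasurableSet B →
        ∑ j, volume.real (Set.Ico (a j) (a j + k j) ∩ B) =
          volume.real (Set.Ico 0 (∑ j, k j) ∩ B) := by
  intro N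
  induction N with
  | zero => intro k _; exact ⟨fun _ => 0, fun i => i.elim0, fun i => i.elim0, fun i => i.elim0, by simp⟩
  | succ N ih =>
    intro k hk
    obtain ⟨a, h1, h20, h2, h3⟩ := ih (fun j => k j.castSucc) (fun j => hk _)
    set W := ∑ j : Fin N, k j.castSucc with hW
    have hW0 : 0 ≤ W := Finset.sum_nonneg fun j _ => hk _
    refine ⟨Fin.snoc (α := fun _ => ℝ) a W, ?_, ?_, ?_, ?_⟩
    · intro i j
      refine Fin.lastCases ?_ (fun j => ?_) j
      · refine Fin.lastCases ?_ (fun i => ?_) i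
        · intro h; exact absurd h (lt_irrefl _)
        · intro _; simpa using h2 i
      · refine Fin.lastCases ?_ (fun i => ?_) i
        · intro h; exact absurd h (not_lt.2 (Fin.le_last _))
        · intro h; simpa using h1 i j (by simpa using h)
    · intro i
      refine Fin.lastCases ?_ (fun i => ?_) i
      · simpa using hW0
      · simpa using h20 i
    · intro i
      rw [Fin.sum_univ_castSucc, ← hW]
      refine Fin.lastCases ?_ (fun i => ?_) i
      · simp
      · have := hk (Fin.last N)
        have := h2 i
        simp; linarith
    · intro B hB
      rw [Fin.sum_univ_castSucc, Fin.sum_univ_castSucc, ← hW]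
      simp only [Fin.snoc_castSucc, Fin.snoc_last]
      rw [h3 B hB]
      have hl := hk (Fin.last N)
      have e : Set.Ico 0 (W + k (Fin.last N)) = Set.Ico 0 W ∪ Set.Ico W (W + k (Fin.last N)) :=
        (Set.Ico_union_Ico_eq_Ico hW0 (by linarith)).symm
      rw [e, Set.union_inter_distrib_right, measureReal_union ?_ (measurableSet_Ico.inter hB)
        ((measure_mono Set.inter_subset_left).trans_lt (by simp)).ne
        ((measure_mono Set.inter_subset_left).trans_lt (by simp)).ne]
      refine Set.disjoint_left.2 ?_
      rintro u ⟨hu, _⟩ ⟨hu', _⟩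
      exact absurd hu.2 (not_lt.2 hu'.1)

lemma lt_ex {a b : ℝ} {B C : Set ℝ}
    (h : volume.real (Set.Ico a b ∩ B) < volume.real (Set.Ico a b ∩ C)) :
    ∃ u ∈ Set.Ico a b, u ∈ C ∧ u ∉ B := by
  by_contra hc
  push Not at hc
  refine absurd h (not_lt.2 ?_)
  refine measureReal_mono (fun u hu => ⟨hu.1, hc u hu.1 hu.2⟩) ?_
  exact ((measure_mono Set.inter_subset_left).trans_lt (by simp)).ne

lemma vol_le {a k : ℝ} (hk : 0 ≤ k) (B : Set ℝ) :
    volume.real (Set.Ico a (a + k) ∩ B) ≤ k := by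
  have : volume.real (Set.Ico a (a + k) ∩ B) ≤ volume.real (Set.Ico a (a + k)) :=
    measureReal_mono Set.inter_subset_left (by simp)
  rwa [Real.volume_real_Ico_of_le (by linarith), add_sub_cancel_left] at this

lemma window {N : ℕ} {k x a : Fin N → ℝ} (hk : ∀ j, 0 ≤ k j) (hx : Monotone x)
    (ha : ∀ i j, i < j → a i + k i ≤ a j) (ha0 : ∀ i, 0 ≤ a i) (haW : ∀ i, a i + k i ≤ ∑ j, k j)
    (hcov : ∀ B : Set ℝ, MeasurableSet B →
        ∑ j, volume.real (Set.Ico (a j) (a j + k j) ∩ B) =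
          volume.real (Set.Ico 0 (∑ j, k j) ∩ B))
    {A : ℝ} (hA : 0 < A) :
    (∀ t t', 0 ≤ t → t ≤ t' → t' + A ≤ ∑ j, k j →
      ∑ j, volume.real (Set.Ico (a j) (a j + k j) ∩ Set.Ico t (t + A)) * x j ≤
      ∑ j, volume.real (Set.Ico (a j) (a j + k j) ∩ Set.Ico t' (t' + A)) * x j) ∧
    ∀ m : Fin N → ℝ, (∀ j, 0 ≤ m j) → (∀ j, m j ≤ k j) → ∑ j, m j = A →
      ∃ t, 0 ≤ t ∧ t + A ≤ ∑ j, k j ∧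
        (∑ j, volume.real (Set.Ico (a j) (a j + k j) ∩ Set.Ico t (t + A)) = A) ∧
        (∑ j, volume.real (Set.Ico (a j) (a j + k j) ∩ Set.Ico t (t + A)) * x j =
          ∑ j, m j * x j) ∧
        ∀ φ : ℝ → ℝ, ConvexOn ℝ Set.univ φ →
          ∑ j, volume.real (Set.Ico (a j) (a j + k j) ∩ Set.Ico t (t + A)) * φ (x j) ≤
          ∑ j, m j * φ (x j) := by
  set W := ∑ j, k j with hW
  set h : ℝ → Fin N → ℝ := fun t j =>
    volume.real (Set.Ico (a j) (a j + k j) ∩ Set.Ico t (t + A)) with hh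
  have hord : ∀ i j u v, u ∈ Set.Ico (a i) (a i + k i) → v ∈ Set.Ico (a j) (a j + k j) →
      u < v → x i ≤ x j := by
    intro i j u v hu hv huv
    refine hx (not_lt.1 fun hji => ?_)
    have := ha j i hji
    linarith [hu.1, hv.2]
  have hsum : ∀ t, 0 ≤ t → t + A ≤ W → ∑ j, h t j = A := by
    intro t h0 h1
    rw [hh]; simp only
    rw [hcov _ measurableSet_Ico, Set.inter_eq_right.2 (Set.Ico_subset_Ico h0 h1),
      Real.volume_real_Ico_of_le (by linarith)]
    ring
  have hpos : ∀ t j, 0 < h t j → ∃ u ∈ Set.Ico (a j) (a j + k j), u ∈ Set.Ico t (t + A) := by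
    intro t j hj
    obtain ⟨u, h1, h2, _⟩ := lt_ex (B := ∅) (C := Set.Ico t (t + A)) (a := a j) (b := a j + k j)
      (by simpa using hj)
    exact ⟨u, h1, h2⟩
  have hlt : ∀ t j, h t j < k j → ∃ u ∈ Set.Ico (a j) (a j + k j), u ∉ Set.Ico t (t + A) := by
    intro t j hj
    obtain ⟨u, h1, _, h2⟩ := lt_ex (B := Set.Ico t (t + A)) (C := Set.univ) (a := a j)
      (b := a j + k j) (by
        rw [Set.inter_univ, Real.volume_real_Ico_of_le (by linarith [hk j])]
        simpa using hj)
    exact ⟨u, h1, h2⟩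
  have h0 : ∀ t j, 0 ≤ h t j := fun t j => measureReal_nonneg
  have hle : ∀ t j, h t j ≤ k j := fun t j => vol_le (hk j) _
  refine ⟨?_, ?_⟩
  · intro t t' ht htt ht'
    have := pivot (fun j => h t' j - h t j) x
      (by rw [Finset.sum_sub_distrib, hsum t ht (by linarith), hsum t' (by linarith) ht', sub_self])
      (by
        intro i j hi hj
        obtain ⟨u, hu, hu1, hu2⟩ := lt_ex (sub_neg.1 hi)
        obtain ⟨v, hv, hv1, hv2⟩ := lt_ex (sub_pos.1 hj)
        refine hord i j u v hu hv ?_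
        have : t + A ≤ v := not_lt.1 fun hc => hv2 ⟨htt.trans hv1.1, hc⟩
        linarith [hu1.2])
    simp only [sub_mul, Finset.sum_sub_distrib] at this
    linarith
  · intro m hm0 hmk hmA
    have hAW : A ≤ W := by rw [← hmA]; exact Finset.sum_le_sum fun j _ => hmk j
    have hcont : Continuous fun t => ∑ j, h t j * x j := by
      refine continuous_finsetSum _ fun j _ => ?_
      refine Continuous.mul ?_ continuous_const
      simp only [hh, Set.Ico_inter_Ico, Real.volume_real_Ico]
      fun_prop
    have hl : ∑ j, h 0 j * x j ≤ ∑ j, m j * x j := by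
      have := pivot (fun j => m j - h 0 j) x
        (by rw [Finset.sum_sub_distrib, hsum 0 le_rfl (by linarith), hmA, sub_self])
        (by
          intro i j hi hj
          obtain ⟨u, hu, hu1⟩ := hpos 0 i (lt_of_le_of_lt (hm0 i) (sub_neg.1 hi))
          obtain ⟨v, hv, hv1⟩ := hlt 0 j (lt_of_lt_of_le (sub_pos.1 hj) (hmk j))
          refine hord i j u v hu hv ?_
          have : 0 + A ≤ v := not_lt.1 fun hc => hv1 ⟨(ha0 j).trans hv.1, hc⟩
          linarith [hu1.2])
      simp only [sub_mul, Finset.sum_sub_distrib] at this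
      linarith
    have hr : ∑ j, m j * x j ≤ ∑ j, h (W - A) j * x j := by
      have := pivot (fun j => h (W - A) j - m j) x
        (by rw [Finset.sum_sub_distrib, hsum (W - A) (by linarith) (by linarith), hmA, sub_self])
        (by
          intro i j hi hj
          obtain ⟨v, hv, hv1⟩ := hlt (W - A) i (lt_of_lt_of_le (sub_neg.1 hi) (hmk i))
          obtain ⟨u, hu, hu1⟩ := hpos (W - A) j (lt_of_le_of_lt (hm0 j) (sub_pos.1 hj))
          refine hord i j v u hv hu ?_
          have : v < W - A := not_le.1 fun hc => hv1 ⟨hc, by linarith [haW i, hv.2]⟩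
          linarith [hu1.1])
      simp only [sub_mul, Finset.sum_sub_distrib] at this
      linarith
    obtain ⟨t, ht, htm⟩ := intermediate_value_Icc (by linarith : (0 : ℝ) ≤ W - A)
      hcont.continuousOn ⟨hl, hr⟩
    simp only at htm
    have ht1 : t + A ≤ W := by linarith [ht.2]
    refine ⟨t, ht.1, ht1, hsum t ht.1 ht1, htm, ?_⟩
    intro φ hφ
    have hne : (Finset.univ.filter fun j => 0 < h t j).Nonempty := by
      by_contra hc
      rw [Finset.not_nonempty_iff_eq_empty] at hc
      have : ∑ j, h t j ≤ 0 := Finset.sum_nonpos fun j _ => not_lt.1 fun hj => by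
        have : j ∈ Finset.univ.filter fun j => 0 < h t j := by simpa using hj
        rw [hc] at this; simp at this
      rw [hsum t ht.1 ht1] at this
      linarith
    obtain ⟨p, hp, hpmin⟩ := Finset.exists_min_image _ x hne
    obtain ⟨q, hq, hqmax⟩ := Finset.exists_max_image _ x hne
    obtain ⟨u, hu, hu1⟩ := hpos t p (by simpa using hp)
    obtain ⟨v, hv, hv1⟩ := hpos t q (by simpa using hq)
    have hz : ∀ j, ¬ 0 < h t j → 0 ≤ m j - h t j := fun j hj => by
      linarith [hm0 j, not_lt.1 hj]
    have := exchange (fun j => m j - h t j) x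
      (by rw [Finset.sum_sub_distrib, hsum t ht.1 ht1, hmA, sub_self])
      (by simp only [sub_mul, Finset.sum_sub_distrib]; linarith) hφ (hpmin q hq)
      (fun j hj => hz j fun h0 => absurd hj (not_lt.2 (hpmin j (by simpa using h0))))
      (fun j hj => hz j fun h0 => absurd hj (not_lt.2 (hqmax j (by simpa using h0))))
      (by
        intro j hj1 hj2
        have hh : ¬ h t j < k j := by
          intro hlt'
          obtain ⟨w, hw, hw1⟩ := hlt t j hlt'
          have c1 : u ≤ w := not_lt.1 fun hc => absurd (hord j p w u hw hu hc) (not_le.2 hj1)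
          have c2 : w ≤ v := not_lt.1 fun hc => absurd (hord q j v w hv hw hc) (not_le.2 hj2)
          exact hw1 ⟨hu1.1.trans c1, lt_of_le_of_lt c2 hv1.2⟩
        linarith [hmk j, not_lt.1 hh])
    simp only [sub_mul, Finset.sum_sub_distrib] at this
    linarith

noncomputable def TT {ι : Type} [Fintype ι] (t : ι → ℝ) (A u : ℝ) : Finset ι :=
  Finset.univ.filter fun y => t y ≤ u ∧ u < t y + A

lemma mem_TT {ι : Type} [Fintype ι] {t : ι → ℝ} {A u : ℝ} {y : ι} :
    y ∈ TT t A u ↔ t y ≤ u ∧ u < t y + A := by simp [TT]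

lemma TT_sq {ι : Type} [Fintype ι] {t : ι → ℝ} {A u u' u1 u2 : ℝ} (h : u ≤ u') (h' : u2 ≤ u1)
    (e1 : TT t A u1 = TT t A u) (e2 : TT t A u2 = TT t A u') (n1 : (TT t A u).Nonempty)
    (n2 : (TT t A u').Nonempty) : TT t A u = TT t A u' := by
  ext y
  constructor
  · intro hy
    have hy1 := hy
    rw [← e1] at hy1
    rw [mem_TT] at hy hy1
    by_contra hc
    have hc2 := hc
    rw [← e2] at hc2
    rw [mem_TT, not_and] at hc hc2
    have c1 := not_lt.1 (hc (hy.1.trans h))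
    have c2 : u2 < t y := not_le.1 fun hh => hc2 hh (by linarith)
    obtain ⟨z, hz⟩ := n2
    have hz2 := hz
    rw [← e2] at hz2
    rw [mem_TT] at hz hz2
    linarith [hz2.1, hz.2]
  · intro hy
    have hy1 := hy
    rw [← e2] at hy1
    rw [mem_TT] at hy hy1
    by_contra hc
    have hc2 := hc
    rw [← e1] at hc2
    rw [mem_TT, not_and] at hc hc2
    have c1 := not_lt.1 (hc2 (hy1.1.trans h'))
    have c2 : u < t y := not_le.1 fun hh => hc hh (by linarith)
    obtain ⟨z, hz⟩ := n1
    have hz2 := hz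
    rw [← e1] at hz2
    rw [mem_TT] at hz hz2
    linarith [hz2.2, hz.1]

lemma cf_eq {ι : Type} [DecidableEq ι] (E k : ℝ) (y : ι) (T : Finset ι) :
    k * cf E y T = k + (E - 1) * (if y ∈ T then k else 0) := by
  unfold cf; split_ifs <;> ring

/-- The conclusion of the windowing step. -/
def WinOut {ι : Type} [Fintype ι] [LinearOrder ι] (k' x' : Finset ι → ℝ) (t : ι → ℝ) (A : ℝ) :
    Prop :=
  0 < A ∧ StrictMono t ∧ (∀ T, 0 < k' T → ∃ u, TT t A u = T) ∧
    (∀ T y y' a b, t y ≤ a → a < b → b ≤ t y' + A → (∀ u ∈ Set.Ico a b, TT t A u = T) →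
      0 < k' T) ∧
    (∀ u u', 0 < k' (TT t A u) → 0 < k' (TT t A u') → (TT t A u).Nonempty →
      (TT t A u').Nonempty → u ≤ u' → x' (TT t A u) ≤ x' (TT t A u'))

lemma winstep_fin {ι : Type} [Fintype ι] [LinearOrder ι] [Nontrivial ι] {N : ℕ}
    {E : ℝ} (hE : 1 < E) {v P : ι → ℝ} (hv : StrictMono v) (hP : ∀ y, 0 ≤ P y) {g : ι → ℝ → ℝ}
    (hg : ∀ y, ConvexOn ℝ Set.univ (g y)) {lo hi G0 : ℝ} (hlh : lo ≤ hi)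
    {τ : Fin N → Finset ι} {k x : Fin N → ℝ} (hx : Monotone x)
    (hF : Feas E v P g lo hi G0 τ k x) :
    ∃ (k' x' : Finset ι → ℝ) (t : ι → ℝ) (A : ℝ), Feas E v P g lo hi G0 id k' x' ∧
      QQ E id k' x' ≤ QQ E τ k x ∧ ∑ T, k' T = ∑ j, k j ∧ WinOut k' x' t A := by
  set W := ∑ j, k j with hW
  set S := ∑ j, k j * x j with hS
  set A := (1 - W) / (E - 1) with hAdef
  have hc : 0 < E - 1 := by linarith
  set m : ι → Fin N → ℝ := fun y j => if y ∈ τ j then k j else 0 with hm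
  have hcf : ∀ y j, k j * cf E y (τ j) = k j + (E - 1) * m y j := fun y j => cf_eq _ _ _ _
  have hm0 : ∀ y j, 0 ≤ m y j := by
    intro y j; simp only [hm]; split_ifs; exacts [hF.nonneg j, le_rfl]
  have hmk : ∀ y j, m y j ≤ k j := by
    intro y j; simp only [hm]; split_ifs; exacts [le_rfl, hF.nonneg j]
  have hmA : ∀ y, ∑ j, m y j = A := by
    intro y
    have := hF.sum y
    simp only [hcf, Finset.sum_add_distrib, ← Finset.mul_sum] at this
    rw [hAdef, eq_div_iff hc.ne']; linarith
  have hmx : ∀ y, S + (E - 1) * ∑ j, m y j * x j = v y := by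
    intro y
    have := hF.mean y
    simp only [hcf, add_mul, mul_assoc, Finset.sum_add_distrib, ← Finset.mul_sum] at this
    exact this
  have hA : 0 < A := by
    obtain ⟨y, z, hyz⟩ := exists_pair_ne ι
    have h0 : 0 ≤ A := by rw [← hmA y]; exact Finset.sum_nonneg fun j _ => hm0 y j
    refine lt_of_le_of_ne h0 fun hA => ?_
    have : ∀ y, v y = S := by
      intro y
      have h1 := hmA y
      rw [← hA] at h1
      have h2 := (Finset.sum_eq_zero_iff_of_nonneg (fun j _ => hm0 y j)).1 h1
      have h3 := hmx y
      rw [Finset.sum_eq_zero (fun j hj => by rw [h2 j hj, zero_mul])] at h3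
      linarith
    exact hyz (hv.injective ((this y).trans (this z).symm))
  obtain ⟨a, ha, ha0, haW, hcov⟩ := exists_cells N k hF.nonneg
  obtain ⟨hmono, hwin⟩ := window hF.nonneg hx ha ha0 haW hcov hA
  choose t ht0 htW hts htx htφ using fun y => hwin (m y) (hm0 y) (hmk y) (hmA y)
  have htm : StrictMono t := by
    intro y z hyz
    by_contra hcon
    have h1 := hmono (t z) (t y) (ht0 z) (not_lt.1 hcon) (htW y)
    rw [htx, htx] at h1
    have h2 := hv hyz
    rw [← hmx y, ← hmx z] at h2
    nlinarith
  set I : Fin N → Set ℝ := fun j => Set.Ico (a j) (a j + k j) with hI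
  have hmeas : ∀ y, MeasurableSet {u | y ∈ TT t A u} := by
    intro y
    have : {u | y ∈ TT t A u} = Set.Ico (t y) (t y + A) := by ext u; simp [mem_TT]
    rw [this]; exact measurableSet_Ico
  have hsp := fun j => split_sum (TT t A) hmeas (I j) (by simp [hI]) measurableSet_Ico
  have hpre : ∀ T, MeasurableSet (TT t A ⁻¹' {T}) := fun T =>
    (split_sum (TT t A) hmeas ∅ (by simp) MeasurableSet.empty).1 T
  set κ : Fin N × Finset ι → ℝ := fun p => volume.real (I p.1 ∩ TT t A ⁻¹' {p.2}) with hκ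
  have hκ0 : ∀ p, 0 ≤ κ p := fun p => measureReal_nonneg
  have hκs : ∀ j, ∑ T, κ (j, T) = k j := by
    intro j
    rw [hκ]; simp only
    rw [(hsp j).2.1, hI]
    simp only
    rw [Real.volume_real_Ico_of_le (by linarith [hF.nonneg j]), add_sub_cancel_left]
  set h : ι → Fin N → ℝ := fun y j => volume.real (I j ∩ Set.Ico (t y) (t y + A)) with hh
  have hκy : ∀ y j, ∑ T, (if y ∈ T then κ (j, T) else 0) = h y j := by
    intro y j
    rw [hκ]; simp only
    rw [(hsp j).2.2 y]
    congr 2; ext u; simp [mem_TT]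
  have hfam : ∀ y (φ : ℝ → ℝ), ∑ p, κ p * cf E y p.2 * φ (x p.1) =
      ∑ j, k j * φ (x j) + (E - 1) * ∑ j, h y j * φ (x j) := by
    intro y φ
    rw [Fintype.sum_prod_type, Finset.mul_sum, ← Finset.sum_add_distrib]
    refine Finset.sum_congr rfl fun j _ => ?_
    simp only [cf_eq]
    rw [← Finset.sum_mul, Finset.sum_add_distrib, ← Finset.mul_sum, hκs, hκy]
    ring
  have hold : ∀ y (φ : ℝ → ℝ), ∑ j, k j * cf E y (τ j) * φ (x j) =
      ∑ j, k j * φ (x j) + (E - 1) * ∑ j, m y j * φ (x j) := by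
    intro y φ
    simp only [hcf, add_mul, mul_assoc, Finset.sum_add_distrib, ← Finset.mul_sum]
  have hcmp : ∀ y (φ : ℝ → ℝ), ConvexOn ℝ Set.univ φ →
      ∑ p, κ p * cf E y p.2 * φ (x p.1) ≤ ∑ j, k j * cf E y (τ j) * φ (x j) := by
    intro y φ hφ
    rw [hfam, hold]
    have := mul_le_mul_of_nonneg_left (htφ y φ hφ) hc.le
    linarith
  have hFκ : Feas E v P g lo hi G0 (fun p : Fin N × Finset ι => p.2) κ (fun p => x p.1) := by
    refine ⟨hκ0, fun y => ?_, fun y => ?_, fun p => hF.hlo _, fun p => hF.hhi _, ?_⟩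
    · have h1 := hfam y (fun _ => 1)
      simp only [mul_one] at h1
      rw [h1, hts y, ← hmA y]
      refine Eq.trans ?_ (hF.sum y)
      simp only [hcf, Finset.sum_add_distrib, ← Finset.mul_sum]
    · have h1 := hfam y (fun s => s)
      rw [h1, htx y, ← hold y (fun s => s)]
      exact hF.mean y
    · refine le_trans ?_ hF.loss
      exact Finset.sum_le_sum fun y _ => mul_le_mul_of_nonneg_left (hcmp y _ (hg y)) (hP y)
  obtain ⟨k', x', hF', hQ', hW', hk', hkx', -⟩ := merge (by linarith) hP hg hlh hFκ
  refine ⟨k', x', t, A, hF', hQ'.trans ?_, ?_, hA, htm, ?_, ?_, ?_⟩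
  · exact Finset.sum_le_sum fun y _ => hcmp y _ (even_two.convexOn_pow)
  · rw [hW', Fintype.sum_prod_type]
    exact Finset.sum_congr rfl fun j _ => hκs j
  · intro T hT
    rw [hk'] at hT
    obtain ⟨p, hp, hpos⟩ := Finset.exists_lt_of_sum_lt (s := Finset.univ.filter
      fun p : Fin N × Finset ι => p.2 = T) (f := fun _ => (0 : ℝ)) (g := κ) (by simpa using hT)
    obtain ⟨u, _, hu, _⟩ := lt_ex (B := ∅) (C := TT t A ⁻¹' {p.2}) (by simpa using hpos)
    exact ⟨u, by rw [← (Finset.mem_filter.1 hp).2]; exact hu⟩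
  · intro T y y' a1 b1 h1 h2 h3 h4
    have e : k' T = volume.real (Set.Ico 0 W ∩ TT t A ⁻¹' {T}) := by
      rw [← hcov _ (hpre T), hk', Finset.sum_filter, Fintype.sum_prod_type]
      simp [hκ, hI]
    rw [e]
    have : volume.real (Set.Ico a1 b1) ≤ volume.real (Set.Ico 0 W ∩ TT t A ⁻¹' {T}) := by
      refine measureReal_mono (fun u hu => ⟨⟨?_, ?_⟩, h4 u hu⟩)
        ((measure_mono Set.inter_subset_left).trans_lt (by simp)).ne
      · linarith [hu.1, ht0 y]
      · linarith [hu.2, htW y']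
    rw [Real.volume_real_Ico_of_le h2.le] at this
    linarith
  · intro u u' hu hu' n1 n2 huu
    by_cases hTT : TT t A u = TT t A u'
    · rw [hTT]
    have hle : ∀ p q : Fin N × Finset ι, p.2 = TT t A u → q.2 = TT t A u' →
        κ p * κ q * x p.1 ≤ κ p * κ q * x q.1 := by
      intro p q hp hq
      rcases (hκ0 p).eq_or_lt with h0 | h0
      · simp [← h0]
      rcases (hκ0 q).eq_or_lt with h0' | h0'
      · simp [← h0']
      obtain ⟨u1, hu1, hu1', _⟩ := lt_ex (B := ∅) (C := TT t A ⁻¹' {p.2}) (by simpa using h0)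
      obtain ⟨u2, hu2, hu2', _⟩ := lt_ex (B := ∅) (C := TT t A ⁻¹' {q.2}) (by simpa using h0')
      refine mul_le_mul_of_nonneg_left (hx (not_lt.1 fun hlt => ?_)) (mul_pos h0 h0').le
      have h21 : u2 ≤ u1 := by linarith [ha _ _ hlt, hu1.1, hu2.2]
      exact hTT (TT_sq huu h21 (hu1'.trans hp) (hu2'.trans hq) n1 n2)
    have e1 : k' (TT t A u) * k' (TT t A u') * x' (TT t A u) =
        ∑ p with p.2 = TT t A u, ∑ q with q.2 = TT t A u', κ p * κ q * x p.1 := by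
      rw [mul_right_comm, hkx', hk', Finset.sum_mul_sum]
      exact Finset.sum_congr rfl fun p _ => Finset.sum_congr rfl fun q _ => by ring
    have e2 : k' (TT t A u) * k' (TT t A u') * x' (TT t A u') =
        ∑ p with p.2 = TT t A u, ∑ q with q.2 = TT t A u', κ p * κ q * x q.1 := by
      rw [mul_assoc, hkx', hk', Finset.sum_mul_sum]
      exact Finset.sum_congr rfl fun p _ => Finset.sum_congr rfl fun q _ => by ring
    refine le_of_mul_le_mul_left ?_ (mul_pos hu hu')
    rw [e1, e2]
    exact Finset.sum_le_sum fun p hp => Finset.sum_le_sum fun q hq =>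
      hle p q (Finset.mem_filter.1 hp).2 (Finset.mem_filter.1 hq).2

lemma winstep {ι : Type} [Fintype ι] [LinearOrder ι] [Nontrivial ι] {J : Type} [Fintype J]
    {E : ℝ} (hE : 1 < E) {v P : ι → ℝ} (hv : StrictMono v) (hP : ∀ y, 0 ≤ P y) {g : ι → ℝ → ℝ}
    (hg : ∀ y, ConvexOn ℝ Set.univ (g y)) {lo hi G0 : ℝ} (hlh : lo ≤ hi)
    {τ : J → Finset ι} {k x : J → ℝ}
    (hF : Feas E v P g lo hi G0 τ k x) :
    ∃ (k' x' : Finset ι → ℝ) (t : ι → ℝ) (A : ℝ), Feas E v P g lo hi G0 id k' x' ∧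
      QQ E id k' x' ≤ QQ E τ k x ∧ ∑ T, k' T = ∑ j, k j ∧ WinOut k' x' t A := by
  let e0 := (Fintype.equivFin J).symm
  let e : Fin (Fintype.card J) ≃ J := (Tuple.sort (x ∘ e0)).trans e0
  have hx : Monotone (x ∘ e) := Tuple.monotone_sort (x ∘ e0)
  have hF' : Feas E v P g lo hi G0 (τ ∘ e) (k ∘ e) (x ∘ e) := by
    refine ⟨fun j => hF.nonneg _, fun y => ?_, fun y => ?_, fun j => hF.hlo _,
      fun j => hF.hhi _, ?_⟩
    · rw [← hF.sum y]; exact e.sum_comp (fun j => k j * cf E y (τ j))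
    · rw [← hF.mean y]; exact e.sum_comp (fun j => k j * cf E y (τ j) * x j)
    · refine le_trans (le_of_eq ?_) hF.loss
      refine Finset.sum_congr rfl fun y _ => ?_
      congr 1
      exact e.sum_comp (fun j => k j * cf E y (τ j) * g y (x j))
  obtain ⟨k', x', t, A, h1, h2, h3, h4⟩ := winstep_fin hE hv hP hg hlh hx hF'
  refine ⟨k', x', t, A, h1, h2.trans (le_of_eq ?_), h3.trans (e.sum_comp k), h4⟩
  refine Finset.sum_congr rfl fun y _ => ?_
  exact e.sum_comp (fun j => k j * cf E y (τ j) * x j ^ 2)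

lemma feas_compact {ι : Type} [Fintype ι] [LinearOrder ι] [Nontrivial ι]
    {E : ℝ} (hE : 1 < E) {v P : ι → ℝ} {g : ι → ℝ → ℝ}
    (hg : ∀ y, ConvexOn ℝ Set.univ (g y)) {lo hi G0 : ℝ} :
    IsCompact {p : (Finset ι → ℝ) × (Finset ι → ℝ) | Feas E v P g lo hi G0 id p.1 p.2} := by
  have hgc : ∀ y, Continuous (g y) := fun y =>
    continuousOn_univ.1 ((hg y).continuousOn isOpen_univ)
  refine IsCompact.of_isClosed_subset (isCompact_Icc (a := ((fun _ => 0, fun _ => lo) :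
    (Finset ι → ℝ) × (Finset ι → ℝ))) (b := (fun _ => 1, fun _ => hi))) ?_ ?_
  · have : {p : (Finset ι → ℝ) × (Finset ι → ℝ) | Feas E v P g lo hi G0 id p.1 p.2} =
        {p | (∀ j, 0 ≤ p.1 j) ∧ (∀ y, ∑ j, p.1 j * cf E y j = 1) ∧
          (∀ y, ∑ j, p.1 j * cf E y j * p.2 j = v y) ∧ (∀ j, lo ≤ p.2 j) ∧ (∀ j, p.2 j ≤ hi) ∧
          ∑ y, P y * ∑ j, p.1 j * cf E y j * g y (p.2 j) ≤ G0} := by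
      ext p
      exact ⟨fun h => ⟨h.nonneg, h.sum, h.mean, h.hlo, h.hhi, h.loss⟩,
        fun h => ⟨h.1, h.2.1, h.2.2.1, h.2.2.2.1, h.2.2.2.2.1, h.2.2.2.2.2⟩⟩
    rw [this]
    simp only [Set.ofPred_and, Set.ofPred_forall]
    refine IsClosed.inter (isClosed_iInter fun j => isClosed_le (by fun_prop) (by fun_prop)) ?_
    refine IsClosed.inter (isClosed_iInter fun j => isClosed_eq (by fun_prop) (by fun_prop)) ?_
    refine IsClosed.inter (isClosed_iInter fun j => isClosed_eq (by fun_prop) (by fun_prop)) ?_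
    refine IsClosed.inter (isClosed_iInter fun j => isClosed_le (by fun_prop) (by fun_prop)) ?_
    refine IsClosed.inter (isClosed_iInter fun j => isClosed_le (by fun_prop) (by fun_prop)) ?_
    exact isClosed_le (by fun_prop) (by fun_prop)
  · intro p hp
    refine ⟨⟨hp.nonneg, hp.hlo⟩, ⟨fun T => ?_, hp.hhi⟩⟩
    obtain ⟨y⟩ : Nonempty ι := inferInstance
    have h1 : ∀ T, p.1 T ≤ p.1 T * cf E y T := by
      intro T
      have := hp.nonneg T
      unfold cf; split_ifs <;> nlinarith
    show p.1 T ≤ 1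
    refine (h1 T).trans ?_
    have h2 := hp.sum y
    rw [← h2]
    exact Finset.single_le_sum (f := fun T => p.1 T * cf E y T)
      (fun T _ => (hp.nonneg T).trans (h1 T)) (Finset.mem_univ T)

lemma core {ι : Type} [Fintype ι] [LinearOrder ι] [Nontrivial ι] {J : Type} [Fintype J]
    {E : ℝ} (hE : 1 < E) {v P : ι → ℝ} (hv : StrictMono v) (hP : ∀ y, 0 ≤ P y) {g : ι → ℝ → ℝ}
    (hg : ∀ y, ConvexOn ℝ Set.univ (g y)) {lo hi G0 : ℝ} (hlh : lo ≤ hi)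
    {τ : J → Finset ι} {k x : J → ℝ}
    (hF : Feas E v P g lo hi G0 τ k x) :
    ∃ (k' x' : Finset ι → ℝ) (t : ι → ℝ) (A : ℝ), Feas E v P g lo hi G0 id k' x' ∧
      WinOut k' x' t A ∧ k' ∅ = 0 ∧ k' Finset.univ = 0 := by
  have hE0 : 0 < E := by linarith
  set K := {p : (Finset ι → ℝ) × (Finset ι → ℝ) | Feas E v P g lo hi G0 id p.1 p.2} with hK
  have hKc : IsCompact K := feas_compact hE hg
  have hKne : K.Nonempty := by
    obtain ⟨k', x', h, -⟩ := merge hE0 hP hg hlh hF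
    exact ⟨(k', x'), h⟩
  have hQc : Continuous fun p : (Finset ι → ℝ) × (Finset ι → ℝ) => QQ E id p.1 p.2 := by
    unfold QQ; fun_prop
  obtain ⟨p0, hp0, hmin0⟩ := hKc.exists_isMinOn hKne hQc.continuousOn
  set K2 := K ∩ {p | QQ E id p.1 p.2 ≤ QQ E id p0.1 p0.2} with hK2
  have hK2c : IsCompact K2 := hKc.inter_right (isClosed_le hQc continuous_const)
  obtain ⟨p1, hp1, hmin1⟩ := hK2c.exists_isMinOn ⟨p0, hp0, (le_rfl : QQ E id p0.1 p0.2 ≤ QQ E id p0.1 p0.2)⟩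
    (f := fun p : (Finset ι → ℝ) × (Finset ι → ℝ) => ∑ T, p.1 T) (by fun_prop)
  obtain ⟨k', x', t, A, hF', hQ', hW', hwin⟩ := winstep hE hv hP hg hlh hp1.1
  have hQ0 : QQ E id k' x' ≤ QQ E id p0.1 p0.2 := hQ'.trans hp1.2
  have noQ : ∀ k2 x2 : Finset ι → ℝ, Feas E v P g lo hi G0 id k2 x2 →
      ¬ QQ E id k2 x2 < QQ E id k' x' := by
    intro k2 x2 h2 hlt
    have h3 : QQ E id p0.1 p0.2 ≤ QQ E id k2 x2 := hmin0 (show (k2, x2) ∈ K from h2)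
    linarith
  have noW : ∀ k2 x2 : Finset ι → ℝ, Feas E v P g lo hi G0 id k2 x2 →
      QQ E id k2 x2 ≤ QQ E id k' x' → ∑ T, k' T ≤ ∑ T, k2 T := by
    intro k2 x2 h2 hle
    have h3 : ∑ T, p1.1 T ≤ ∑ T, k2 T :=
      hmin1 (show (k2, x2) ∈ K2 from ⟨h2, hle.trans hQ0⟩)
    linarith
  refine ⟨k', x', t, A, hF', hwin, ?_, ?_⟩
  · -- no constant low column
    by_contra hne
    have hpos := lt_of_le_of_ne (hF'.nonneg ∅) (Ne.symm hne)
    set τ2 : Finset ι → Finset ι := fun T => if T = ∅ then Finset.univ else T with hτ2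
    set k2 : Finset ι → ℝ := fun T => if T = ∅ then k' ∅ / E else k' T with hk2
    have hterm : ∀ y T, k2 T * cf E y (τ2 T) = k' T * cf E y T := by
      intro y T
      by_cases hT : T = ∅
      · subst hT; simp [hk2, hτ2, cf]; field_simp
      · simp [hk2, hτ2, hT]
    have hF2 : Feas E v P g lo hi G0 τ2 k2 x' := by
      refine ⟨fun T => ?_, ?_, ?_, hF'.hlo, hF'.hhi, ?_⟩
      · simp only [hk2]; split_ifs
        · positivity
        · exact hF'.nonneg T
      · simp only [hterm]; exact hF'.sum
      · simp only [hterm]; exact hF'.mean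
      · simp only [hterm]; exact hF'.loss
    have hQ2 : QQ E τ2 k2 x' = QQ E id k' x' := by
      unfold QQ; simp only [hterm]; rfl
    obtain ⟨k3, x3, hF3, hQ3, hW3, -⟩ := merge hE0 hP hg hlh hF2
    have h4 := noW k3 x3 hF3 (hQ3.trans hQ2.le)
    rw [hW3] at h4
    have h5 : ∑ T, k2 T < ∑ T, k' T := by
      refine Finset.sum_lt_sum (fun T _ => ?_) ⟨∅, Finset.mem_univ _, ?_⟩
      · simp only [hk2]; split_ifs with hT
        · subst hT; exact div_le_self hpos.le hE.le
        · exact le_rfl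
      · simp only [hk2, if_true]; exact div_lt_self hpos hE
    linarith
  · by_contra hne
    have hpos := lt_of_le_of_ne (hF'.nonneg Finset.univ) (Ne.symm hne)
    obtain ⟨hA, htm, hex, hpp, hlab⟩ := hwin
    obtain ⟨u0, hu0⟩ := hex _ hpos
    have hu0' : ∀ y, t y ≤ u0 ∧ u0 < t y + A := fun y => mem_TT.1 (hu0 ▸ Finset.mem_univ y)
    obtain ⟨y1, -, hy1⟩ := Finset.exists_min_image (Finset.univ : Finset ι) id Finset.univ_nonempty
    obtain ⟨y', hy'⟩ := exists_ne y1
    obtain ⟨y2, hy2m, hy2⟩ := Finset.exists_min_image (Finset.univ.erase y1) id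
      ⟨y', by simp [hy']⟩
    have hy2ne : y2 ≠ y1 := (Finset.mem_erase.1 hy2m).1
    have hy12 : y1 < y2 := lt_of_le_of_ne (hy1 y2 (Finset.mem_univ _)) hy2ne.symm
    have ht12 : t y1 < t y2 := htm hy12
    have hge : ∀ y, y ≠ y1 → t y2 ≤ t y := fun y hy =>
      htm.monotone (hy2 y (Finset.mem_erase.2 ⟨hy, Finset.mem_univ _⟩))
    have hge1 : ∀ y, t y1 ≤ t y := fun y => htm.monotone (hy1 y (Finset.mem_univ _))
    have hT1 : ∀ u ∈ Set.Ico (t y1) (t y2), TT t A u = {y1} := by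
      intro u hu
      ext y
      rw [mem_TT, Finset.mem_singleton]
      constructor
      · intro h; by_contra hc; linarith [hge y hc, h.1, hu.2]
      · rintro rfl; exact ⟨hu.1, by linarith [hu.2, (hu0' y2).1, (hu0' y).2]⟩
    have hT2 : ∀ u ∈ Set.Ico (t y1 + A) (t y2 + A), TT t A u = {y1}ᶜ := by
      intro u hu
      ext y
      rw [mem_TT, Finset.mem_compl, Finset.mem_singleton]
      constructor
      · rintro h rfl; linarith [h.2, hu.1]
      · intro hc; exact ⟨by linarith [hu.1, (hu0' y).1, (hu0' y1).2], by linarith [hge y hc, hu.2]⟩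
    have hk1 : 0 < k' {y1} := hpp {y1} y1 y2 (t y1) (t y2) le_rfl ht12 (by linarith) hT1
    have hk2 : 0 < k' {y1}ᶜ := hpp {y1}ᶜ y1 y2 (t y1 + A) (t y2 + A) (by linarith) (by linarith)
      le_rfl hT2
    have hs1 : ({y1} : Finset ι) ≠ Finset.univ := by
      intro h; have := Finset.mem_univ y2; rw [← h] at this; simp [hy2ne] at this
    have hs2 : ({y1}ᶜ : Finset ι) ≠ Finset.univ := by
      intro h; have := Finset.mem_univ y1; rw [← h] at this; simp at this
    -- splitting the full column
    set τ2 : Finset ι × Bool → Finset ι := fun p =>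
      if p.1 = Finset.univ then (if p.2 then {y1} else {y1}ᶜ) else p.1 with hτ2
    set κ : Finset ι × Bool → ℝ := fun p =>
      if p.1 = Finset.univ then k' Finset.univ * E / (1 + E) else k' p.1 / 2 with hκ
    have hterm : ∀ y T, ∑ b, κ (T, b) * cf E y (τ2 (T, b)) = k' T * cf E y T := by
      intro y T
      rw [Fintype.sum_bool]
      by_cases hT : T = Finset.univ
      · subst hT
        have : (1 + E) ≠ 0 := by positivity
        by_cases hy : y = y1
        · subst hy; simp [hκ, hτ2, cf]; field_simp; ring
        · simp [hκ, hτ2, cf, hy]; field_simp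
      · simp [hκ, hτ2, hT]; ring
    have hterm2 : ∀ y (φ : ℝ → ℝ), ∑ p, κ p * cf E y (τ2 p) * φ (x' p.1) =
        ∑ T, k' T * cf E y T * φ (x' T) := by
      intro y φ
      rw [Fintype.sum_prod_type]
      refine Finset.sum_congr rfl fun T _ => ?_
      rw [← hterm, Finset.sum_mul]
    have hκ0 : ∀ p, 0 ≤ κ p := by
      intro p
      have := hF'.nonneg p.1
      simp only [hκ]; split_ifs <;> positivity
    have hF2 : Feas E v P g lo hi G0 τ2 κ (fun p => x' p.1) := by
      refine ⟨hκ0, fun y => ?_, fun y => ?_, fun p => hF'.hlo _, fun p => hF'.hhi _, ?_⟩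
      · have := hterm2 y (fun _ => 1)
        simp only [mul_one] at this
        rw [this]; exact hF'.sum y
      · rw [hterm2 y (fun s => s)]; exact hF'.mean y
      · simp only [hterm2]; exact hF'.loss
    have hQ2 : QQ E τ2 κ (fun p => x' p.1) = QQ E id k' x' :=
      Finset.sum_congr rfl fun y _ => hterm2 y (fun s => s ^ 2)
    obtain ⟨k3, x3, hF3, -, -, -, -, hst⟩ := merge hE0 hP hg hlh hF2
    have hκu : ∀ b, 0 < κ (Finset.univ, b) := by
      intro b; simp only [hκ, if_true]; positivity
    have heq : ∀ T b, T ≠ Finset.univ → 0 < k' T → τ2 (Finset.univ, b) = T →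
        x' T = x' Finset.univ := by
      intro T b hT hkT hb
      by_contra hne
      have hκT : 0 < κ (T, b) := by simp only [hκ, hT, if_false]; positivity
      refine noQ k3 x3 hF3 ?_
      rw [← hQ2]
      exact hst inferInstance (T, b) (Finset.univ, b) hκT (hκu b) (by rw [hb]; simp [hτ2, hT]) hne
    have hx1 : x' {y1} = x' Finset.univ := heq _ true hs1 hk1 (by simp [hτ2])
    have hx2 : x' {y1}ᶜ = x' Finset.univ := heq _ false hs2 hk2 (by simp [hτ2])
    set X := x' Finset.univ with hX
    have e1 := hT1 (t y1) ⟨le_rfl, ht12⟩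
    have e2 := hT2 (t y1 + A) ⟨le_rfl, by linarith⟩
    have n1 : ({y1} : Finset ι).Nonempty := ⟨y1, by simp⟩
    have n2 : ({y1}ᶜ : Finset ι).Nonempty := ⟨y2, by simp [hy2ne]⟩
    have hall : ∀ T, 0 < k' T → T.Nonempty → (y1 ∈ T ∨ y2 ∈ T) → x' T = X := by
      intro T hT hTn hTy
      obtain ⟨u, rfl⟩ := hex T hT
      obtain ⟨z, hz⟩ := id hTn
      apply le_antisymm
      · by_cases hu : u ≤ t y1 + A
        · have := hlab u (t y1 + A) hT (by rwa [e2]) hTn (by rwa [e2]) hu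
          rwa [e2, hx2] at this
        · push Not at hu
          have hy2T : y2 ∈ TT t A u := hTy.resolve_left fun h => by
            linarith [(mem_TT.1 h).2]
          rw [hT2 u ⟨hu.le, (mem_TT.1 hy2T).2⟩, hx2]
      · have h1 : t y1 ≤ u := (hge1 z).trans (mem_TT.1 hz).1
        have := hlab (t y1) u (by rwa [e1]) hT (by rwa [e1]) hTn h1
        rwa [e1, hx1] at this
    have hmean : ∀ y, (y = y1 ∨ y = y2) → v y = ∑ T, k' T * (x' T - X) + X := by
      intro y hy
      have h1 := hF'.mean y
      have h2 := hF'.sum y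
      have h3 : v y - X = ∑ T, k' T * cf E y T * (x' T - X) := by
        simp only [mul_sub, Finset.sum_sub_distrib, ← Finset.sum_mul]
        simp only [id] at h1 h2
        rw [h1, h2, one_mul]
      have h4 : ∑ T, k' T * cf E y T * (x' T - X) = ∑ T, k' T * (x' T - X) := by
        refine Finset.sum_congr rfl fun T _ => ?_
        by_cases hyT : y ∈ T
        · rcases (hF'.nonneg T).eq_or_lt with h0 | h0
          · simp [← h0]
          · rw [hall T h0 ⟨y, hyT⟩ (by rcases hy with rfl | rfl; exacts [Or.inl hyT, Or.inr hyT])]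
            ring
        · simp [cf, hyT]
      linarith
    exact absurd (hv hy12) (by rw [hmean y1 (Or.inl rfl), hmean y2 (Or.inr rfl)]; exact lt_irrefl _)

lemma col {ι : Type} [Fintype ι] [DecidableEq ι] [Nonempty ι] {E : ℝ} (hE : 1 < E) (M : ι → ℝ)
    (h0 : ∀ y, 0 ≤ M y) (hdp : ∀ y y', M y' ≤ E * M y) :
    ∃ k : Finset ι → ℝ, (∀ T, 0 ≤ k T) ∧ ∀ y, ∑ T, k T * cf E y T = M y := by
  have hc : 0 < E - 1 := by linarith
  obtain ⟨y0, hy0⟩ := Finite.exists_min M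
  set q := M y0 with hq
  have hq0 : 0 ≤ q := h0 y0
  obtain ⟨-, h2, h3⟩ := split_sum (fun u : ℝ => Finset.univ.filter fun y => q + u < M y)
    (fun y => by
      have : {u : ℝ | y ∈ Finset.univ.filter fun y => q + u < M y} = Set.Iio (M y - q) := by
        ext u; simp; constructor <;> intro h <;> linarith
      rw [this]; exact measurableSet_Iio) (Set.Ico 0 ((E - 1) * q)) (by simp) measurableSet_Ico
  set w : Finset ι → ℝ := fun T => volume.real (Set.Ico 0 ((E - 1) * q) ∩
    (fun u : ℝ => Finset.univ.filter fun y => q + u < M y) ⁻¹' {T}) with hw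
  refine ⟨fun T => w T / (E - 1), fun T => div_nonneg measureReal_nonneg hc.le, fun y => ?_⟩
  have e2 : ∑ T, w T = (E - 1) * q := by
    rw [h2, Real.volume_real_Ico_of_le (by positivity)]; ring
  have e3 : ∑ T, (if y ∈ T then w T else 0) = M y - q := by
    rw [h3 y]
    have : Set.Ico 0 ((E - 1) * q) ∩ {u : ℝ | y ∈ Finset.univ.filter fun y => q + u < M y}
        = Set.Ico 0 (M y - q) := by
      ext u
      have := hdp y0 y
      simp only [Set.mem_inter_iff, Set.mem_Ico, Set.mem_ofPred_eq, Finset.mem_filter,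
        Finset.mem_univ, true_and]
      constructor
      · rintro ⟨⟨a, b⟩, c⟩; exact ⟨a, by linarith⟩
      · rintro ⟨a, b⟩; exact ⟨⟨a, by linarith⟩, by linarith⟩
    rw [this, Real.volume_real_Ico_of_le (by linarith [hy0 y])]; ring
  have : ∀ T, w T / (E - 1) * cf E y T = (w T) / (E - 1) + (if y ∈ T then w T else 0) := by
    intro T
    rw [cf_eq]; split_ifs
    · field_simp
    · ring
  simp only [this, Finset.sum_add_distrib, ← Finset.sum_div, e2, e3]
  field_simp; ring

lemma start_feas {ι : Type} [Fintype ι] [DecidableEq ι] [Nonempty ι] {E : ℝ} (hE : 1 < E)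
    {v P : ι → ℝ} {g : ι → ℝ → ℝ} {m : ℕ} (z : Fin m → ℝ) (M : ι → Fin m → ℝ)
    (h0 : ∀ y i, 0 ≤ M y i) (hdp : ∀ i y y', M y' i ≤ E * M y i) (hs : ∀ y, ∑ i, M y i = 1)
    (hm : ∀ y, ∑ i, M y i * z i = v y) :
    ∃ (k x : Fin m × Finset ι → ℝ), Feas E v P g (-∑ i, |z i|) (∑ i, |z i|)
      (∑ y, P y * ∑ i, M y i * g y (z i)) (fun j => j.2) k x := by
  choose k hk0 hk using fun i => col hE (fun y => M y i) (fun y => h0 y i) (hdp i)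
  have hz : ∀ i, |z i| ≤ ∑ i, |z i| := fun i =>
    Finset.single_le_sum (f := fun i => |z i|) (fun i _ => abs_nonneg _) (Finset.mem_univ i)
  have key : ∀ (f : ℝ → ℝ) y,
      ∑ j : Fin m × Finset ι, k j.1 j.2 * cf E y j.2 * f (z j.1) = ∑ i, M y i * f (z i) := by
    intro f y
    rw [Fintype.sum_prod_type]
    refine Finset.sum_congr rfl fun i _ => ?_
    simp only [← Finset.sum_mul, hk]
  refine ⟨fun j => k j.1 j.2, fun j => z j.1, fun j => hk0 _ _, fun y => ?_, fun y => ?_,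
    fun j => (abs_le.1 (hz _)).1, fun j => (abs_le.1 (hz _)).2, ?_⟩
  · have := key (fun _ => 1) y
    simp only [mul_one] at this
    rw [this, hs]
  · rw [← hm y]; exact key (fun s => s) y
  · simp only [key, le_refl]

lemma reindex {ι : Type} [Fintype ι] [LinearOrder ι] {k' : Finset ι → ℝ} {t : ι → ℝ} {A : ℝ}
    (h0 : ∀ T, 0 ≤ k' T) (h : ∀ T, 0 < k' T → ∃ u, TT t A u = T) :
    ∃ (m : ℕ) (u : Fin m → ℝ), StrictMono u ∧ (∀ i, 0 < k' (TT t A (u i))) ∧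
      (Function.Injective fun i => TT t A (u i)) ∧
      ∀ f : Finset ι → ℝ, ∑ i, k' (TT t A (u i)) * f (TT t A (u i)) = ∑ T, k' T * f T := by
  classical
  have : ∀ T, ∃ u, 0 < k' T → TT t A u = T := by
    intro T
    by_cases hT : 0 < k' T
    · obtain ⟨u, hu⟩ := h T hT; exact ⟨u, fun _ => hu⟩
    · exact ⟨0, fun h => absurd h hT⟩
  choose r hr using this
  set S : Finset (Finset ι) := Finset.univ.filter fun T => 0 < k' T with hS
  set R := S.image r with hR
  have hmem : ∀ u ∈ R, 0 < k' (TT t A u) ∧ r (TT t A u) = u := by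
    intro u hu
    obtain ⟨T, hT, rfl⟩ := Finset.mem_image.1 hu
    have hT : 0 < k' T := by simpa [hS] using hT
    rw [hr T hT]; exact ⟨hT, rfl⟩
  refine ⟨R.card, R.orderEmbOfFin rfl, (R.orderEmbOfFin rfl).strictMono,
    fun i => (hmem _ (R.orderEmbOfFin_mem rfl i)).1, ?_, fun f => ?_⟩
  · intro i j hij
    have e := congrArg r hij
    simp only [(hmem _ (R.orderEmbOfFin_mem rfl i)).2,
      (hmem _ (R.orderEmbOfFin_mem rfl j)).2] at e
    exact (R.orderEmbOfFin rfl).injective e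
  · have e1 : ∑ i, k' (TT t A (R.orderEmbOfFin rfl i)) * f (TT t A (R.orderEmbOfFin rfl i))
        = ∑ u ∈ R, k' (TT t A u) * f (TT t A u) := by
      have := Finset.sum_map Finset.univ (R.orderEmbOfFin rfl).toEmbedding
        (fun u => k' (TT t A u) * f (TT t A u))
      rw [Finset.map_orderEmbOfFin_univ] at this
      rw [this]; rfl
    rw [e1, hR, Finset.sum_image]
    · rw [hS, Finset.sum_filter]
      refine Finset.sum_congr rfl fun T _ => ?_
      split_ifs with hT
      · rw [hr T hT]
      · rw [le_antisymm (not_lt.1 hT) (h0 T), zero_mul]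
    · intro T hT T' hT' e
      have hT : 0 < k' T := by simpa [hS] using hT
      have hT' : 0 < k' T' := by simpa [hS] using hT'
      rw [← hr T hT, ← hr T' hT', e]
end LR


/-- For `ε > 0`, a finite label set `Y ⊆ ℝ` with `|Y| ≥ 2`, a loss `g`
convex in its first argument and a prior `P`: every `ε`-DP unbiased randomizer `M₀` can
be replaced by an `ε`-DP unbiased randomizer `M` with sorted output labels, no larger
noisy label loss, whose columns have all entries in `{q i, e^ε·q i}` (with `q i` the
minimum entry of column `i`, both values attained, columns nonzero), such that each
column's set of `U`-entries is a contiguous interval of `Y` (pattern `L*U+L*`), and the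
endpoints `Φ₁, Φ₂` of these intervals are weakly increasing in the column index with at
least one strict increase at each step. -/
theorem stmt_2
    (ε : ℝ) (hε : 0 < ε)
    (Y : Finset ℝ) (hYcard : 2 ≤ Y.card)
    (g : ℝ → ℝ → ℝ)
    (hg : ∀ y ∈ Y, ConvexOn ℝ Set.univ (fun s => g s y))
    (P : ℝ → ℝ) (hP0 : ∀ y ∈ Y, 0 ≤ P y) (hP1 : ∑ y ∈ Y, P y = 1)
    (m₀ : ℕ) (yhat₀ : Fin m₀ → ℝ) (M₀ : ℝ → Fin m₀ → ℝ)
    (h₀nonneg : ∀ y ∈ Y, ∀ i, 0 ≤ M₀ y i)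
    (h₀sum : ∀ y ∈ Y, ∑ i, M₀ y i = 1)
    (h₀dp : ∀ i, ∀ y ∈ Y, ∀ y' ∈ Y, M₀ y' i ≤ Real.exp ε * M₀ y i)
    (h₀unbiased : ∀ y ∈ Y, ∑ i, M₀ y i * yhat₀ i = y) :
    ∃ (m : ℕ) (yhat : Fin m → ℝ) (M : ℝ → Fin m → ℝ),
      -- M is a label randomizer on Y
      (∀ y ∈ Y, ∀ i, 0 ≤ M y i) ∧
      (∀ y ∈ Y, ∑ i, M y i = 1) ∧
      -- M is ε-DP
      (∀ i, ∀ y ∈ Y, ∀ y' ∈ Y, M y' i ≤ Real.exp ε * M y i) ∧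
      -- M is unbiased
      (∀ y ∈ Y, ∑ i, M y i * yhat i = y) ∧
      -- the output labels are sorted: yhat 1 ≤ ... ≤ yhat m
      Monotone yhat ∧
      -- (1) the noisy label loss does not increase
      (∑ y ∈ Y, P y * ∑ i, M y i * g (yhat i) y) ≤
        (∑ y ∈ Y, P y * ∑ i, M₀ y i * g (yhat₀ i) y) ∧
      -- q i is the minimum entry of column i
      ∃ q : Fin m → ℝ,
        (∀ i, ∃ y ∈ Y, M y i = q i) ∧
        (∀ i, ∀ y ∈ Y, q i ≤ M y i) ∧
        -- (2) every column is nonzero, all entries lie in {q i, e^ε·q i},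
        -- and both values are attained
        (∀ i, ∃ y ∈ Y, M y i ≠ 0) ∧
        (∀ i, ∀ y ∈ Y, M y i = q i ∨ M y i = Real.exp ε * q i) ∧
        (∀ i, ∃ y ∈ Y, M y i = Real.exp ε * q i) ∧
        -- (3) the set T(i) = {y ∈ Y : M y i = e^ε·q i} is a contiguous interval of Y
        (∀ i, ∀ y ∈ Y, ∀ y' ∈ Y, ∀ y'' ∈ Y, y ≤ y' → y' ≤ y'' →
          M y i = Real.exp ε * q i → M y'' i = Real.exp ε * q i →
          M y' i = Real.exp ε * q i) ∧
        -- (4) Φ₁ i = min T(i) and Φ₂ i = max T(i) are weakly increasing,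
        -- with at least one strict increase at each step
        ∃ Φ₁ Φ₂ : Fin m → ℝ,
          (∀ i, Φ₁ i ∈ Y ∧ M (Φ₁ i) i = Real.exp ε * q i ∧
            ∀ y ∈ Y, M y i = Real.exp ε * q i → Φ₁ i ≤ y) ∧
          (∀ i, Φ₂ i ∈ Y ∧ M (Φ₂ i) i = Real.exp ε * q i ∧
            ∀ y ∈ Y, M y i = Real.exp ε * q i → y ≤ Φ₂ i) ∧
          (∀ i i' : Fin m, i < i' →
            Φ₁ i ≤ Φ₁ i' ∧ Φ₂ i ≤ Φ₂ i' ∧ (Φ₁ i < Φ₁ i' ∨ Φ₂ i < Φ₂ i')) := by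

  have hE : 1 < Real.exp ε := Real.one_lt_exp_iff.2 hε
  set E := Real.exp ε with hEdef
  have hE0 : 0 < E := by linarith
  have : Nontrivial {x // x ∈ Y} := by
    rw [← Fintype.one_lt_card_iff_nontrivial, Fintype.card_coe]; omega
  obtain ⟨k, x, hF⟩ := LR.start_feas (ι := {x // x ∈ Y}) (v := fun y => y.1) (P := fun y => P y.1)
    (g := fun y s => g s y.1) hE yhat₀ (fun y i => M₀ y.1 i) (fun y i => h₀nonneg y.1 y.2 i)
    (fun i y y' => h₀dp i y.1 y.2 y'.1 y'.2) (fun y => h₀sum y.1 y.2)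
    (fun y => h₀unbiased y.1 y.2)
  have hB : 0 ≤ ∑ i, |yhat₀ i| := Finset.sum_nonneg fun i _ => abs_nonneg _
  obtain ⟨k', x', t, A, hF', ⟨hA, ht, hrep, -, hlab⟩, he, hu⟩ :=
    LR.core (ι := {x // x ∈ Y}) (v := fun y => y.1) (P := fun y => P y.1)
      (g := fun y s => g s y.1) hE (fun a b h => h) (fun y => hP0 y.1 y.2) (fun y => hg y.1 y.2)
      (by linarith) hF
  obtain ⟨m, u, hum, hpos, hinj, hsum⟩ := LR.reindex hF'.nonneg hrep
  set T : Fin m → Finset {x // x ∈ Y} := fun i => LR.TT t A (u i) with hT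
  have hne : ∀ i, (T i).Nonempty := by
    intro i
    by_contra h
    have h2 := hpos i
    rw [Finset.not_nonempty_iff_eq_empty] at h
    change 0 < k' (T i) at h2
    rw [h, he] at h2; exact lt_irrefl _ h2
  have hnu : ∀ i, ∃ y, y ∉ T i := by
    intro i
    by_contra! h
    have h2 := hpos i
    change 0 < k' (T i) at h2
    rw [Finset.eq_univ_iff_forall.2 h, hu] at h2; exact lt_irrefl _ h2
  have hpos' : ∀ i, 0 < k' (T i) := hpos
  have hmT : ∀ i y, y ∈ T i ↔ t y ≤ u i ∧ u i < t y + A := fun i y => LR.mem_TT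
  obtain ⟨M, hM⟩ : ∃ M : ℝ → Fin m → ℝ, ∀ (y : {x // x ∈ Y}) i,
      M y.1 i = k' (T i) * LR.cf E y (T i) := by
    refine ⟨fun y i => if h : y ∈ Y then k' (T i) * LR.cf E ⟨y, h⟩ (T i) else 0, fun y i => ?_⟩
    simp [y.2]
  have hMU : ∀ (y : {x // x ∈ Y}) i, M y.1 i = E * k' (T i) ↔ y ∈ T i := by
    intro y i
    rw [hM, LR.cf]
    have := hpos' i
    split_ifs with h
    · simp [h, mul_comm]
    · simp only [h, iff_false]; intro h; nlinarith
  have hML : ∀ (y : {x // x ∈ Y}) i, y ∉ T i → M y.1 i = k' (T i) := by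
    intro y i h; rw [hM, LR.cf, if_neg h, mul_one]
  have hge : ∀ (y : {x // x ∈ Y}) i, k' (T i) ≤ M y.1 i := by
    intro y i
    by_cases h : y ∈ T i
    · rw [(hMU y i).2 h]; nlinarith [hpos' i]
    · rw [hML y i h]
  have hle : ∀ (y : {x // x ∈ Y}) i, M y.1 i ≤ E * k' (T i) := by
    intro y i
    by_cases h : y ∈ T i
    · rw [(hMU y i).2 h]
    · rw [hML y i h]; nlinarith [hpos' i]
  have hS : ∀ (f : ℝ → ℝ) (y : {x // x ∈ Y}), ∑ i, M y.1 i * f (x' (T i)) =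
      ∑ S, k' S * LR.cf E y S * f (x' S) := by
    intro f y
    simp only [hM, mul_assoc]
    exact hsum fun S => LR.cf E y S * f (x' S)
  have hcont : ∀ i (y y' y'' : {x // x ∈ Y}), y ≤ y' → y' ≤ y'' → y ∈ T i → y'' ∈ T i →
      y' ∈ T i := by
    intro i y y' y'' h h' h1 h2
    rw [hmT] at *
    have := ht.monotone h
    have := ht.monotone h'
    constructor <;> linarith [h1.1, h1.2, h2.1, h2.2]
  refine ⟨m, fun i => x' (T i), M, ?_, ?_, ?_, ?_, ?_, ?_, fun i => k' (T i), ?_, ?_, ?_, ?_, ?_,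
    ?_, fun i => ((T i).min' (hne i)).1, fun i => ((T i).max' (hne i)).1, ?_, ?_, ?_⟩
  · intro y hy i; exact (hpos' i).le.trans (hge ⟨y, hy⟩ i)
  · intro y hy
    have := hS (fun _ => 1) ⟨y, hy⟩
    simp only [mul_one] at this
    rw [this]; exact hF'.sum ⟨y, hy⟩
  · intro i y hy y' hy'
    exact (hle ⟨y', hy'⟩ i).trans (mul_le_mul_of_nonneg_left (hge ⟨y, hy⟩ i) hE0.le)
  · intro y hy
    exact (hS (fun s => s) ⟨y, hy⟩).trans (hF'.mean ⟨y, hy⟩)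
  · intro i j hij
    exact hlab _ _ (hpos i) (hpos j) (hne i) (hne j) (hum.monotone hij)
  · rw [← Finset.sum_coe_sort, ← Finset.sum_coe_sort Y]
    refine le_trans (le_of_eq ?_) hF'.loss
    refine Finset.sum_congr rfl fun y _ => ?_
    congr 1
    exact hS (fun s => g s y.1) y
  · intro i
    obtain ⟨y, hy⟩ := hnu i
    exact ⟨y.1, y.2, hML y i hy⟩
  · intro i y hy; exact hge ⟨y, hy⟩ i
  · intro i
    obtain ⟨y, hy⟩ := hnu i
    exact ⟨y.1, y.2, by rw [hML y i hy]; exact (hpos' i).ne'⟩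
  · intro i y hy
    by_cases h : ⟨y, hy⟩ ∈ T i
    · exact Or.inr ((hMU ⟨y, hy⟩ i).2 h)
    · exact Or.inl (hML ⟨y, hy⟩ i h)
  · intro i
    obtain ⟨y, hy⟩ := hne i
    exact ⟨y.1, y.2, (hMU y i).2 hy⟩
  · intro i y hy y' hy' y'' hy'' h h' h1 h2
    exact (hMU ⟨y', hy'⟩ i).2 (hcont i ⟨y, hy⟩ ⟨y', hy'⟩ ⟨y'', hy''⟩ h h'
      ((hMU ⟨y, hy⟩ i).1 h1) ((hMU ⟨y'', hy''⟩ i).1 h2))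
  · intro i
    refine ⟨Subtype.prop _, (hMU _ i).2 (Finset.min'_mem _ _), fun y hy h => ?_⟩
    exact Finset.min'_le (T i) ⟨y, hy⟩ ((hMU ⟨y, hy⟩ i).1 h)
  · intro i
    refine ⟨Subtype.prop _, (hMU _ i).2 (Finset.max'_mem _ _), fun y hy h => ?_⟩
    exact Finset.le_max' (T i) ⟨y, hy⟩ ((hMU ⟨y, hy⟩ i).1 h)
  · intro i j hij
    have huu := hum hij
    have h1 : (T i).min' (hne i) ≤ (T j).min' (hne j) := by
      by_contra! h
      have a := (hmT _ _).1 ((T i).min'_mem (hne i))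
      have b := (hmT _ _).1 ((T j).min'_mem (hne j))
      have c := ht h
      exact absurd (Finset.min'_le (T i) _ ((hmT _ _).2 ⟨by linarith [a.1], by linarith [b.2]⟩))
        (not_le.2 h)
    have h2 : (T i).max' (hne i) ≤ (T j).max' (hne j) := by
      by_contra! h
      have a := (hmT _ _).1 ((T i).max'_mem (hne i))
      have b := (hmT _ _).1 ((T j).max'_mem (hne j))
      have c := ht h
      exact absurd (Finset.le_max' (T j) _ ((hmT _ _).2 ⟨by linarith [a.1], by linarith [b.2]⟩))
        (not_le.2 h)
    refine ⟨h1, h2, ?_⟩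
    by_contra! hcc
    have e1 : (T i).min' (hne i) = (T j).min' (hne j) := le_antisymm h1 hcc.1
    have e2 : (T i).max' (hne i) = (T j).max' (hne j) := le_antisymm h2 hcc.2
    refine hij.ne (hinj ?_)
    change T i = T j
    ext y
    constructor
    · intro hy
      refine hcont j _ y _ (e1 ▸ Finset.min'_le _ _ hy) (e2 ▸ Finset.le_max' _ _ hy)
        (Finset.min'_mem _ (hne j)) (Finset.max'_mem _ (hne j))
    · intro hy
      refine hcont i _ y _ (e1.symm ▸ Finset.min'_le _ _ hy) (e2.symm ▸ Finset.le_max' _ _ hy)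
        (Finset.min'_mem _ (hne i)) (Finset.max'_mem _ (hne i))
end

section
/- Let ε > 0, let Y ⊆ ℝ be a finite set of input labels with |Y| ≥ 2, let g : ℝ × ℝ → ℝ be a loss such that g(·, y) is convex for every y ∈ Y, and let P be a prior on Y. Let M¹ be an ε-DP label randomizer on Y with finitely many output labels such that each column of M¹ is a positive scalar multiple of a vector with entries in {1, e^ε}, with these vectors pairwise distinct across columns. Then there exists an ε-DP label randomizer M² on Y, again with each column a positive scalar multiple of a {1, e^ε}-valued vector and with the same expected output as M¹ on every input label y ∈ Y, such that G(M²;P) ≤ G(M¹;P) and, with the output labels of M² sorted in increasing order, for every input label y ∈ Y the set of output indices i for which M²_{y→i} equals e^ε times the minimum entry of column i is a nonempty contiguous set of indices (i.e., every row of the signature matrix matches the pattern L*U+L*). -/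
/-- Feasible configurations: `ε`-DP nonnegative matrices with labels in `[a,b]`, each row of which
is dominated in the convex order by the functional `B y`. -/
structure LFeas {T : Type} (E a b : ℝ) (B : T → (ℝ → ℝ) → ℝ) {n : ℕ}
    (x : Fin n → ℝ) (M : T → Fin n → ℝ) : Prop where
  range : ∀ i, x i ∈ Set.Icc a b
  nonneg : ∀ y i, 0 ≤ M y i
  dp : ∀ i y y', M y' i ≤ E * M y i
  cvx : ∀ y, ∀ φ : ℝ → ℝ, ConvexOn ℝ Set.univ φ → ∑ i, M y i * φ (x i) ≤ B y φ

lemma LFeas.sum_eq {T : Type} {E a b : ℝ} {B : T → (ℝ → ℝ) → ℝ} {n : ℕ}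
    {x : Fin n → ℝ} {M : T → Fin n → ℝ} (h : LFeas E a b B x M)
    (hB1 : ∀ y, B y (fun _ => 1) = 1) (hB2 : ∀ y, B y (fun _ => -1) = -1) (y : T) :
    ∑ i, M y i = 1 := by
  have h1 := h.cvx y (fun _ => 1) (convexOn_const _ convex_univ)
  have h2 := h.cvx y (fun _ => -1) (convexOn_const _ convex_univ)
  rw [hB1] at h1
  rw [hB2] at h2
  simp at h1 h2
  linarith

lemma exists_opt {T : Type} [Fintype T] {E a b : ℝ} {B : T → (ℝ → ℝ) → ℝ} {n : ℕ}
    (hB1 : ∀ y, B y (fun _ => 1) = 1) (hB2 : ∀ y, B y (fun _ => -1) = -1)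
    (hne : ∃ (x : Fin n → ℝ) (M : T → Fin n → ℝ), LFeas E a b B x M) :
    ∃ (x : Fin n → ℝ) (M : T → Fin n → ℝ), LFeas E a b B x M ∧
      ∀ (x' : Fin n → ℝ) (M' : T → Fin n → ℝ), LFeas E a b B x' M' →
        ∑ y, ∑ i, M y i * x i ^ 2 ≤ ∑ y, ∑ i, M' y i * x' i ^ 2 := by
  let K : Set ((Fin n → ℝ) × (T → Fin n → ℝ)) := {p | LFeas E a b B p.1 p.2}
  have hKeq : K = (⋂ i, {p | p.1 i ∈ Set.Icc a b}) ∩ (⋂ y, ⋂ i, {p | 0 ≤ p.2 y i}) ∩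
      (⋂ i, ⋂ y, ⋂ y', {p | p.2 y' i ≤ E * p.2 y i}) ∩
      (⋂ y, ⋂ φ : ℝ → ℝ, ⋂ _ : ConvexOn ℝ Set.univ φ, {p | ∑ i, p.2 y i * φ (p.1 i) ≤ B y φ}) := by
    ext p
    simp only [Set.mem_inter_iff, Set.mem_iInter, K]
    exact ⟨fun h => ⟨⟨⟨h.range, h.nonneg⟩, h.dp⟩, h.cvx⟩, fun h => ⟨h.1.1.1, h.1.1.2, h.1.2, h.2⟩⟩
  have hclosed : IsClosed K := by
    rw [hKeq]
    refine ((IsClosed.inter ?_ ?_).inter ?_).inter ?_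
    · exact isClosed_iInter fun i => isClosed_Icc.preimage (by fun_prop)
    · exact isClosed_iInter fun y => isClosed_iInter fun i =>
        isClosed_le (by fun_prop) (by fun_prop)
    · exact isClosed_iInter fun y => isClosed_iInter fun i => isClosed_iInter fun i' =>
        isClosed_le (by fun_prop) (by fun_prop)
    · refine isClosed_iInter fun y => isClosed_iInter fun φ => isClosed_iInter fun hφ => ?_
      have hc : Continuous φ := by
        rw [← continuousOn_univ]; exact hφ.continuousOn isOpen_univ
      exact isClosed_le (by fun_prop) (by fun_prop)
  have hcomp : IsCompact K := by
    refine IsCompact.of_isClosed_subset (isCompact_Icc (a := ((fun _ => a, fun _ _ => 0) :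
      (Fin n → ℝ) × (T → Fin n → ℝ))) (b := (fun _ => b, fun _ _ => 1))) hclosed ?_
    intro p hp
    have hp : LFeas E a b B p.1 p.2 := hp
    refine ⟨⟨fun i => (hp.range i).1, fun y i => hp.nonneg y i⟩,
      ⟨fun i => (hp.range i).2, fun y i => ?_⟩⟩
    change p.2 y i ≤ 1
    rw [← hp.sum_eq hB1 hB2 y]
    exact Finset.single_le_sum (f := fun i => p.2 y i) (fun i _ => hp.nonneg y i)
      (Finset.mem_univ i)
  obtain ⟨x, M, h⟩ := hne
  obtain ⟨p, hp, hmin⟩ := hcomp.exists_isMinOn (f := fun p => ∑ y, ∑ i, p.2 y i * p.1 i ^ 2)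
    ⟨(x, M), h⟩ (by fun_prop)
  exact ⟨p.1, p.2, hp, fun x' M' h' => hmin (show (x', M') ∈ K from h')⟩

/-- merging two columns -/
lemma LFeas.merge {T : Type} {E a b : ℝ} {B : T → (ℝ → ℝ) → ℝ} {n : ℕ}
    {x : Fin (n + 1) → ℝ} {M : T → Fin (n + 1) → ℝ} (h : LFeas E a b B x M)
    (i j : Fin (n + 1)) (hij : i ≠ j) (hx : ∀ y, M y j = 0 ∨ x j = x i) :
    ∃ (x' : Fin n → ℝ) (M' : T → Fin n → ℝ), LFeas E a b B x' M' := by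
  obtain ⟨k, rfl⟩ := Fin.exists_succAbove_eq hij
  refine ⟨fun l => x (j.succAbove l),
    fun y l => M y (j.succAbove l) + if l = k then M y j else 0, ?_, ?_, ?_, ?_⟩
  · intro l; exact h.range _
  · intro y l
    have := h.nonneg y (j.succAbove l)
    have := h.nonneg y j
    split_ifs <;> linarith
  · intro l y y'
    have := h.dp (j.succAbove l) y y'
    have := h.dp j y y'
    split_ifs <;> linarith
  · intro y φ hφ
    refine le_trans (le_of_eq ?_) (h.cvx y φ hφ)
    rw [Fin.sum_univ_succAbove _ j]
    simp only [add_mul, Finset.sum_add_distrib, ite_mul, zero_mul, Finset.sum_ite_eq',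
      Finset.mem_univ, if_true]
    rcases hx y with h0 | h0
    · rw [h0]; ring
    · rw [h0]; ring

lemma LFeas.reindex {T : Type} {E a b : ℝ} {B : T → (ℝ → ℝ) → ℝ} {n : ℕ}
    {x : Fin n → ℝ} {M : T → Fin n → ℝ} (h : LFeas E a b B x M) (σ : Equiv.Perm (Fin n)) :
    LFeas E a b B (x ∘ σ) (fun y i => M y (σ i)) where
  range i := h.range _
  nonneg y i := h.nonneg y _
  dp i := h.dp _
  cvx y φ hφ := by
    refine le_trans (le_of_eq ?_) (h.cvx y φ hφ)
    exact Equiv.sum_comp σ (fun i => M y i * φ (x i))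

/-- No configuration strictly improves on `(x, M)`. -/
def LNoImp {T : Type} (E a b : ℝ) {n : ℕ} (x : Fin n → ℝ) (M : T → Fin n → ℝ) : Prop :=
  ∀ (x' : Fin (n) → ℝ) (M' : T → Fin (n) → ℝ),
    (∀ i, x' i ∈ Set.Icc a b) → (∀ y i, 0 ≤ M' y i) →
    (∀ i y y', M' y' i ≤ E * M' y i) →
    (∀ y, ∀ φ : ℝ → ℝ, ConvexOn ℝ Set.univ φ →
      ∑ i, M' y i * φ (x' i) ≤ ∑ i, M y i * φ (x i)) →
    (∃ y, ∑ i, M' y i * x' i ^ 2 < ∑ i, M y i * x i ^ 2) → False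

/-- An optimal configuration with distinct labels, sorted, positive, improvement-free. -/
lemma exists_good {T : Type} [Fintype T] [Nonempty T] {E a b : ℝ}
    {B : T → (ℝ → ℝ) → ℝ} {m : ℕ}
    (hB1 : ∀ y, B y (fun _ => 1) = 1) (hB2 : ∀ y, B y (fun _ => -1) = -1)
    {x₁ : Fin m → ℝ} {M₁ : T → Fin m → ℝ} (h₁ : LFeas E a b B x₁ M₁) :
    ∃ (n : ℕ) (x : Fin (n + 1) → ℝ) (M : T → Fin (n + 1) → ℝ), LFeas E a b B x M ∧
      StrictMono x ∧ (∀ y i, 0 < M y i) ∧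
      LNoImp E a b x M := by
  classical
  have hex : ∃ n, ∃ (x : Fin n → ℝ) (M : T → Fin n → ℝ), LFeas E a b B x M := ⟨m, x₁, M₁, h₁⟩
  let N := Nat.find hex
  have hN : ∃ (x : Fin N → ℝ) (M : T → Fin N → ℝ), LFeas E a b B x M := Nat.find_spec hex
  have hNmin : ∀ k < N, ¬ ∃ (x : Fin k → ℝ) (M : T → Fin k → ℝ), LFeas E a b B x M :=
    fun k hk => Nat.find_min hex hk
  clear_value N
  obtain ⟨x, M, h, hopt⟩ := exists_opt hB1 hB2 hN
  obtain ⟨y0⟩ := ‹Nonempty T›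
  have hsum := h.sum_eq hB1 hB2
  rcases N with _ | n
  · have := hsum y0
    simp at this
  have hinj : Function.Injective x := by
    intro i j hij
    by_contra hne
    exact hNmin n (by omega) (h.merge i j hne (fun y => Or.inr hij.symm))
  have hpos : ∀ y i, 0 < M y i := by
    intro y i
    by_contra hc
    have h0 : M y i = 0 := le_antisymm (not_lt.mp hc) (h.nonneg y i)
    have hall : ∀ y', M y' i = 0 := fun y' => by
      have := h.dp i y y'
      rw [h0] at this
      have := h.nonneg y' i
      linarith
    by_cases hj : ∃ j, j ≠ i
    · obtain ⟨j, hj⟩ := hj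
      exact hNmin n (by omega) (h.merge j i hj (fun y => Or.inl (hall y)))
    · push Not at hj
      have := hsum y0
      rw [Finset.sum_eq_zero (fun j _ => by rw [hj j, hall])] at this
      norm_num at this
  let σ := Tuple.sort x
  have hmono : Monotone (x ∘ σ) := Tuple.monotone_sort x
  refine ⟨n, x ∘ σ, fun y i => M y (σ i), h.reindex σ,
    hmono.strictMono_of_injective (hinj.comp σ.injective), fun y i => hpos y _, ?_⟩
  intro x' M' hr hn hd hc ⟨y, hy⟩
  have hre : ∀ y, ∀ φ : ℝ → ℝ, ∑ i, M y (σ i) * φ ((x ∘ σ) i) = ∑ i, M y i * φ (x i) :=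
    fun y φ => Equiv.sum_comp σ (fun i => M y i * φ (x i))
  simp only [hre] at hc
  have hf : LFeas E a b B x' M' := ⟨hr, hn, hd, fun y φ hφ => (hc y φ hφ).trans (h.cvx y φ hφ)⟩
  have hle := hopt x' M' hf
  have hsq : ConvexOn ℝ Set.univ (fun s : ℝ => s ^ 2) := Even.convexOn_pow (by decide)
  have hlt : ∑ y, ∑ i, M' y i * x' i ^ 2 < ∑ y, ∑ i, M y i * x i ^ 2 := by
    refine Finset.sum_lt_sum (fun z _ => hc z _ hsq) ⟨y, Finset.mem_univ _, ?_⟩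
    rw [← hre y (fun s => s ^ 2)]
    exact hy
  linarith

/-- partition of an interval with prescribed breakpoints -/
lemma exists_layers {T : Type} [Fintype T] (C : ℝ) (hC : 0 < C) (b : T → ℝ)
    (hb : ∀ y, 0 ≤ b y ∧ b y ≤ C) :
    ∃ (n : ℕ) (l : Fin n → ℝ) (k : T → ℕ), (∀ i, 0 < l i) ∧ ∑ i, l i = C ∧
      ∀ y, ∑ i : Fin n, (if (i : ℕ) < k y then l i else 0) = b y := by
  classical
  let D : Finset ℝ := insert 0 (insert C (Finset.univ.image b))
  have hDne : D.Nonempty := ⟨0, by simp [D]⟩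
  obtain ⟨n, hn⟩ : ∃ n, D.card = n + 1 := ⟨D.card - 1, by have := hDne.card_pos; omega⟩
  let d := D.orderEmbOfFin hn
  have hsurj : ∀ s ∈ D, ∃ i, d i = s := fun s hs => by
    have := Finset.range_orderEmbOfFin D hn
    have h2 : s ∈ Set.range d := by rw [this]; exact hs
    exact h2
  have hmem : ∀ i, d i ∈ D := fun i => Finset.orderEmbOfFin_mem D hn i
  have hDb : ∀ s ∈ D, 0 ≤ s ∧ s ≤ C := by
    intro s hs
    simp only [D, Finset.mem_insert, Finset.mem_image, Finset.mem_univ, true_and] at hs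
    rcases hs with rfl | rfl | ⟨y, rfl⟩
    · exact ⟨le_rfl, hC.le⟩
    · exact ⟨hC.le, le_rfl⟩
    · exact hb y
  have hd0 : d 0 = 0 := by
    obtain ⟨i, hi⟩ := hsurj 0 (by simp [D])
    refine le_antisymm ?_ (hDb _ (hmem 0)).1
    rw [← hi]; exact d.monotone (Fin.zero_le i)
  have hdn : d (Fin.last n) = C := by
    obtain ⟨i, hi⟩ := hsurj C (by simp [D])
    refine le_antisymm (hDb _ (hmem _)).2 ?_
    rw [← hi]; exact d.monotone (Fin.le_last i)
  let f : ℕ → ℝ := fun j => if h : j < n + 1 then d ⟨j, h⟩ else 0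
  have hf : ∀ i : Fin (n + 1), f i = d i := fun i => dif_pos i.2
  have hsumk : ∀ k, k ≤ n → ∑ i : Fin n, (if (i : ℕ) < k then f (i + 1) - f i else 0) = f k := by
    intro k hk
    rw [Fin.sum_univ_eq_sum_range (fun i => if i < k then f (i + 1) - f i else 0) n,
      ← Finset.sum_filter]
    have : (Finset.range n).filter (fun i => i < k) = Finset.range k := by
      ext i; simp; omega
    rw [this, Finset.sum_range_sub]
    have : f 0 = 0 := by rw [← hd0]; exact hf 0
    rw [this, sub_zero]
  choose idx hidx using fun y => hsurj (b y) (by simp [D])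
  refine ⟨n, fun i => f (i + 1) - f i, fun y => idx y, ?_, ?_, ?_⟩
  · intro i
    have h1 : f i = d i.castSucc := hf i.castSucc
    have h2 : f (i + 1) = d i.succ := by have := hf i.succ; simpa using this
    change 0 < f (i + 1) - f i
    rw [h1, h2, sub_pos]
    exact d.strictMono Fin.castSucc_lt_succ
  · have := hsumk n le_rfl
    have h3 : f n = C := by rw [← hdn]; exact hf (Fin.last n)
    rw [h3] at this
    rw [← this]
    exact Finset.sum_congr rfl fun i _ => by simp
  · intro y
    rw [hsumk (idx y) (by have := (idx y).2; omega), hf, hidx]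

lemma exch_one {T : Type} [Fintype T] {E a b : ℝ} (hE : 1 < E) {n : ℕ}
    {x : Fin n → ℝ} {M : T → Fin n → ℝ} (hr : ∀ i, x i ∈ Set.Icc a b) (hx : StrictMono x)
    (hno : LNoImp E a b x M) (C : Fin n → ℝ) (hC0 : ∀ i, 0 < C i)
    (hC : ∀ i y, C i ≤ M y i ∧ M y i ≤ E * C i) (y : T) (i1 i2 i3 : Fin n)
    (h12 : i1 < i2) (h23 : i2 < i3) (h1 : C i1 < M y i1) (h3 : C i3 < M y i3) :
    M y i2 = E * C i2 := by
  classical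
  by_contra hne
  have h2 : M y i2 < E * C i2 := lt_of_le_of_ne (hC i2 y).2 hne
  have x12 := hx h12
  have x23 := hx h23
  obtain ⟨δ, hδ0, hδ1, hδ2, hδ3⟩ : ∃ δ > 0, δ ≤ M y i1 - C i1 ∧ δ ≤ E * C i2 - M y i2 ∧
      δ ≤ M y i3 - C i3 :=
    ⟨min (M y i1 - C i1) (min (E * C i2 - M y i2) (M y i3 - C i3)),
      lt_min (by linarith) (lt_min (by linarith) (by linarith)), min_le_left _ _,
      (min_le_right _ _).trans (min_le_left _ _), (min_le_right _ _).trans (min_le_right _ _)⟩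
  obtain ⟨u, v, hu, hv, huv, hcomb⟩ : ∃ u v : ℝ, 0 < u ∧ 0 < v ∧ u + v = 1 ∧
      u * x i1 + v * x i3 = x i2 := by
    have : (0 : ℝ) < x i3 - x i1 := by linarith
    refine ⟨(x i3 - x i2) / (x i3 - x i1), (x i2 - x i1) / (x i3 - x i1),
      div_pos (by linarith) this, div_pos (by linarith) this, ?_, ?_⟩
    · field_simp; ring
    · field_simp; ring
  have n12 : i1 ≠ i2 := h12.ne
  have n23 : i2 ≠ i3 := h23.ne
  have n13 : i1 ≠ i3 := (h12.trans h23).ne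
  let d : Fin n → ℝ := fun k => (if k = i1 then -(u * δ) else 0) + (if k = i2 then δ else 0) +
    (if k = i3 then -(v * δ) else 0)
  let M' : T → Fin n → ℝ := fun z k => M z k + if z = y then d k else 0
  have hd : ∀ φ : ℝ → ℝ, ∑ k, d k * φ (x k) = δ * (φ (x i2) - u * φ (x i1) - v * φ (x i3)) := by
    intro φ
    simp only [d, add_mul, Finset.sum_add_distrib, ite_mul, zero_mul, Finset.sum_ite_eq',
      Finset.mem_univ, if_true]
    ring
  have hsumy : ∀ φ : ℝ → ℝ, ∑ k, M' y k * φ (x k) =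
      ∑ k, M y k * φ (x k) + δ * (φ (x i2) - u * φ (x i1) - v * φ (x i3)) := by
    intro φ
    simp only [M', if_true, add_mul, Finset.sum_add_distrib, hd]
  have huδ : 0 < u * δ := mul_pos hu hδ0
  have hvδ : 0 < v * δ := mul_pos hv hδ0
  have huvδ : u * δ + v * δ = δ := by rw [← add_mul, huv, one_mul]
  have hM' : ∀ k z, C k ≤ M' z k ∧ M' z k ≤ E * C k := by
    intro k z
    have hk := hC k z
    by_cases hz : z = y
    · subst hz
      simp only [M', d, if_true]
      by_cases k1 : k = i1
      · subst k1
        simp only [n12, n13, if_true, if_false]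
        constructor <;> linarith
      · by_cases k2 : k = i2
        · subst k2
          simp only [k1, n23, if_true, if_false]
          constructor <;> linarith
        · by_cases k3 : k = i3
          · subst k3
            simp only [k1, k2, if_true, if_false]
            constructor <;> linarith
          · simp only [k1, k2, k3, if_false]
            constructor <;> linarith
    · simp only [M', hz, if_false, add_zero]
      exact hk
  refine hno x M' hr (fun z k => (hC0 k).le.trans (hM' k z).1) (fun k z z' => ?_) ?_ ⟨y, ?_⟩
  · exact (hM' k z').2.trans (mul_le_mul_of_nonneg_left (hM' k z).1 (by linarith))
  · intro z φ hφ
    by_cases hz : z = y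
    · subst hz
      rw [hsumy]
      have := hφ.2 (Set.mem_univ (x i1)) (Set.mem_univ (x i3)) hu.le hv.le huv
      simp only [smul_eq_mul, hcomb] at this
      nlinarith
    · simp [M', hz]
  · rw [hsumy (fun s => s ^ 2)]
    have : x i2 ^ 2 - u * x i1 ^ 2 - v * x i3 ^ 2 = - (u * v * (x i3 - x i1) ^ 2) := by
      rw [← hcomb]
      have : v = 1 - u := by linarith
      rw [this]; ring
    simp only [this]
    have : 0 < u * v * (x i3 - x i1) ^ 2 :=
      mul_pos (mul_pos hu hv) (pow_pos (by linarith) 2)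
    nlinarith

lemma exch_two {T : Type} [Fintype T] [Nonempty T] {E a b : ℝ} {n : ℕ}
    {x : Fin n → ℝ} {M : T → Fin n → ℝ} (hr : ∀ i, x i ∈ Set.Icc a b) (hx : StrictMono x)
    (hM : ∀ y i, 0 < M y i) (hdp : ∀ i y y', M y' i ≤ E * M y i)
    (hno : LNoImp E a b x M) (i j : Fin n) (hij : j ≠ i) :
    ∃ y y', M y' i = E * M y i := by
  classical
  by_contra! hne
  have hlt : ∀ y y', M y' i < E * M y i := fun y y' => lt_of_le_of_ne (hdp i y y') (hne y y')
  have hxij : x i ≠ x j := fun h => hij (hx.injective h).symm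
  obtain ⟨τ, ⟨hA, hB⟩, hτ⟩ : ∃ τ : ℝ, ((∀ y, 0 < M y i - τ * M y j) ∧
      (∀ y y', M y' i - τ * M y' j < E * (M y i - τ * M y j))) ∧ 0 < τ := by
    have h1 : ∀ᶠ τ : ℝ in nhds 0, ∀ y, 0 < M y i - τ * M y j := by
      rw [Filter.eventually_all]
      intro y
      have : Continuous fun τ : ℝ => M y i - τ * M y j := by fun_prop
      refine this.continuousAt.eventually (lt_mem_nhds ?_)
      simpa using hM y i
    have h2 : ∀ᶠ τ : ℝ in nhds 0, ∀ y y', M y' i - τ * M y' j < E * (M y i - τ * M y j) := by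
      rw [Filter.eventually_all]
      intro y
      rw [Filter.eventually_all]
      intro y'
      have c1 : Continuous fun τ : ℝ => M y' i - τ * M y' j := by fun_prop
      have c2 : Continuous fun τ : ℝ => E * (M y i - τ * M y j) := by fun_prop
      refine c1.continuousAt.eventually_lt c2.continuousAt ?_
      simpa using hlt y y'
    have h3 := (h1.and h2).filter_mono (nhdsWithin_le_nhds (s := Set.Ioi (0 : ℝ)))
    exact (h3.and self_mem_nhdsWithin).exists
  have hτ1 : 0 < 1 + τ := by linarith
  have huv : 1 / (1 + τ) + τ / (1 + τ) = 1 := by field_simp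
  have hu : 0 < 1 / (1 + τ) := by positivity
  have hv : 0 < τ / (1 + τ) := by positivity
  let p : ℝ := 1 / (1 + τ) * x j + τ / (1 + τ) * x i
  let x' : Fin n → ℝ := Function.update x j p
  let M' : T → Fin n → ℝ := fun y k => M y k + ((if k = i then -(τ * M y j) else 0) +
    (if k = j then τ * M y j else 0))
  have hsum : ∀ y, ∀ φ : ℝ → ℝ, ∑ k, M' y k * φ (x' k) = ∑ k, M y k * φ (x k) +
      M y j * ((1 + τ) * φ p - φ (x j) - τ * φ (x i)) := by
    intro y φ
    have : ∀ k, M' y k * φ (x' k) = M y k * φ (x k) + ((if k = i then -(τ * M y j) * φ (x i) else 0)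
      + (if k = j then (1 + τ) * M y j * φ p - M y j * φ (x j) else 0)) := by
      intro k
      by_cases k1 : k = i
      · subst k1
        simp [M', x', hij.symm]
        ring
      · by_cases k2 : k = j
        · subst k2
          simp only [M', x', k1, if_true, if_false, Function.update_self]
          ring
        · simp [M', x', k1, k2]
    simp only [this, Finset.sum_add_distrib, Finset.sum_ite_eq', Finset.mem_univ, if_true]
    ring
  have hMi : ∀ y, M' y i = M y i - τ * M y j := by
    intro y; simp [M', hij.symm]; ring
  have hMj : ∀ y, M' y j = (1 + τ) * M y j := by
    intro y; simp [M', hij]; ring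
  have hMk : ∀ y k, k ≠ i → k ≠ j → M' y k = M y k := by
    intro y k k1 k2; simp [M', k1, k2]
  obtain ⟨y0⟩ := ‹Nonempty T›
  refine hno x' M' ?_ ?_ ?_ ?_ ⟨y0, ?_⟩
  · intro k
    by_cases k2 : k = j
    · subst k2
      simp only [x', Function.update_self]
      exact convex_Icc a b (hr k) (hr i) hu.le hv.le huv
    · simp only [x', Function.update_of_ne k2]
      exact hr k
  · intro y k
    by_cases k1 : k = i
    · subst k1; rw [hMi]; exact (hA y).le
    · by_cases k2 : k = j
      · subst k2; rw [hMj]; exact (mul_pos hτ1 (hM y k)).le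
      · rw [hMk y k k1 k2]; exact (hM y k).le
  · intro k y y'
    by_cases k1 : k = i
    · subst k1; rw [hMi, hMi]; exact (hB y y').le
    · by_cases k2 : k = j
      · subst k2; rw [hMj, hMj]
        have := mul_le_mul_of_nonneg_left (hdp k y y') hτ1.le
        linarith
      · rw [hMk y k k1 k2, hMk y' k k1 k2]; exact hdp k y y'
  · intro y φ hφ
    rw [hsum]
    have := hφ.2 (Set.mem_univ (x j)) (Set.mem_univ (x i)) hu.le hv.le huv
    simp only [smul_eq_mul] at this
    have h2 := mul_le_mul_of_nonneg_left this hτ1.le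
    have h3 : (1 + τ) * (1 / (1 + τ) * φ (x j) + τ / (1 + τ) * φ (x i)) =
      φ (x j) + τ * φ (x i) := by field_simp
    rw [h3] at h2
    have h4 : (1 + τ) * φ p - φ (x j) - τ * φ (x i) ≤ 0 := by
      change (1 + τ) * φ p ≤ _ at h2
      linarith
    have := mul_nonpos_of_nonneg_of_nonpos (hM y j).le h4
    linarith
  · rw [hsum y0 (fun s => s ^ 2)]
    have h4 : (1 + τ) * p ^ 2 - x j ^ 2 - τ * x i ^ 2 = - (τ / (1 + τ) * (x i - x j) ^ 2) := by
      simp only [p]; field_simp; ring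
    simp only [h4]
    have : 0 < τ / (1 + τ) * (x i - x j) ^ 2 :=
      mul_pos hv (by have := sub_ne_zero.mpr hxij; positivity)
    have := mul_pos (hM y0 j) this
    linarith

/-- Final arrangement over a linearly ordered finite index type. -/
lemma arrange {T : Type} [Fintype T] {E a b : ℝ} (hE : 1 < E) {n : ℕ}
    {x : Fin n → ℝ} {M : T → Fin n → ℝ} (hr : ∀ i, x i ∈ Set.Icc a b) (hx : StrictMono x)
    (hno : LNoImp E a b x M) (hn : 0 < n) (hsum1 : ∀ y, ∑ i, M y i = 1)
    (C : Fin n → ℝ) (hC0 : ∀ i, 0 < C i)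
    (hC : ∀ i y, C i ≤ M y i ∧ M y i ≤ E * C i)
    (hlow : ∀ i, ∃ y, M y i = C i) (hhigh : ∀ i, ∃ y, M y i = E * C i) :
    ∃ (J : Type) (_ : LinearOrder J) (_ : Fintype J) (z : J → ℝ) (l : J → ℝ) (U : T → J → Prop)
      (_ : ∀ y j, Decidable (U y j)),
      Monotone z ∧ (∀ j, 0 < l j) ∧ (∀ j, ∃ y, ¬ U y j) ∧ (∀ y, ∃ j, U y j) ∧
      (∀ y j j' j'', j ≤ j' → j' ≤ j'' → U y j → U y j'' → U y j') ∧
      (∀ y, ∀ φ : ℝ → ℝ, ∑ j, (l j * if U y j then E else 1) * φ (z j) =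
        ∑ i, M y i * φ (x i)) := by
  classical
  have hE1 : 0 < E - 1 := by linarith
  let A : T → Fin n → ℝ := fun y i => (M y i - C i) / (E - 1)
  have hA0 : ∀ y i, 0 ≤ A y i := fun y i => div_nonneg (by linarith [(hC i y).1]) hE1.le
  have hAC : ∀ y i, A y i ≤ C i := fun y i => by
    rw [div_le_iff₀ hE1]; linarith [(hC i y).2]
  have hMA : ∀ y i, M y i = C i + (E - 1) * A y i := fun y i => by
    simp only [A]; field_simp; ring
  let R : T → Fin n → Prop := fun y i => ∃ i' < i, C i' < M y i'
  choose N l k hl hlC hk using fun i => exists_layers (C i) (hC0 i)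
    (fun y => if R y i then A y i else C i - A y i) (fun y => by
      have := hA0 y i
      have := hAC y i
      split_ifs <;> constructor <;> linarith)
  let V : T → (i : Fin n) → Fin (N i) → Prop := fun y i j =>
    if R y i then (j : ℕ) < k i y else ¬ (j : ℕ) < k i y
  have hV : ∀ y i, ∑ j, (if V y i j then l i j else 0) = A y i := by
    intro y i
    have h1 := hk i y
    by_cases hR : R y i
    · simpa only [V, hR, if_true] using h1
    · simp only [hR, if_false] at h1
      simp only [V, hR, if_false]
      have h2 := hlC i
      have h3 : ∑ j : Fin (N i), (if ¬ (j : ℕ) < k i y then l i j else 0) +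
          ∑ j : Fin (N i), (if (j : ℕ) < k i y then l i j else 0) = ∑ j, l i j := by
        rw [← Finset.sum_add_distrib]
        refine Finset.sum_congr rfl fun j _ => ?_
        split_ifs <;> simp
      linarith
  have hVpos : ∀ y i j, V y i j → C i < M y i := by
    intro y i j h
    have : l i j ≤ A y i := by
      rw [← hV y i]
      refine le_trans (le_of_eq ?_) (Finset.single_le_sum
        (f := fun j => if V y i j then l i j else 0) (fun j _ => ?_) (Finset.mem_univ j))
      · simp [h]
      · have := (hl i j).le
        split_ifs <;> linarith
    have h2 := hl i j
    have h3 : 0 < (E - 1) * A y i := mul_pos hE1 (by linarith)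
    linarith [hMA y i]
  have hVfull : ∀ y i j, M y i = E * C i → V y i j := by
    intro y i j h
    by_contra hc
    have hAe : A y i = C i := by simp only [A, h]; field_simp
    have : A y i < ∑ j, l i j := by
      rw [← hV y i]
      refine Finset.sum_lt_sum (fun j _ => ?_) ⟨j, Finset.mem_univ _, ?_⟩
      · have := (hl i j).le
        split_ifs <;> linarith
      · simpa [hc] using hl i j
    rw [hlC] at this
    linarith
  have hclaim := exch_one hE hr hx hno C hC0 hC
  have hNpos : ∀ i, 0 < N i := by
    intro i
    rcases Nat.eq_zero_or_pos (N i) with h | h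
    · exfalso
      have h1 := hlC i
      have : IsEmpty (Fin (N i)) := by rw [h]; infer_instance
      rw [Finset.univ_eq_empty, Finset.sum_empty] at h1
      linarith [hC0 i]
    · exact h
  have hfin : Fintype (Σₗ i : Fin n, Fin (N i)) :=
    Fintype.ofEquiv (Σ i : Fin n, Fin (N i)) toLex
  refine ⟨Σₗ i : Fin n, Fin (N i), inferInstance, hfin, fun j => x (ofLex j).1,
    fun j => l (ofLex j).1 (ofLex j).2, fun y j => V y (ofLex j).1 (ofLex j).2,
    fun y j => Classical.dec _, ?_, fun j => hl _ _, ?_, ?_, ?_, ?_⟩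
  · intro p q hpq
    rcases Sigma.Lex.le_def.mp hpq with h | ⟨h, -⟩
    · exact (hx h).le
    · exact (congrArg x h).le
  · intro j
    obtain ⟨y, hy⟩ := hlow (ofLex j).1
    refine ⟨y, fun h => ?_⟩
    have := hVpos y _ _ h
    linarith
  · intro y
    have : ∃ i, C i < M y i := by
      by_contra! hc
      have he : ∀ i, M y i = C i := fun i => le_antisymm (hc i) (hC i y).1
      have h1 : ∑ i, C i = 1 := by
        rw [← hsum1 y]; exact Finset.sum_congr rfl fun i _ => (he i).symm
      obtain ⟨y', hy'⟩ := hhigh ⟨0, hn⟩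
      have h2 : ∑ i, C i < ∑ i, M y' i :=
        Finset.sum_lt_sum (fun i _ => (hC i y').1) ⟨⟨0, hn⟩, Finset.mem_univ _, by
          rw [hy']; nlinarith [hC0 ⟨0, hn⟩]⟩
      rw [h1, hsum1] at h2
      exact lt_irrefl _ h2
    obtain ⟨i, hi⟩ := this
    by_contra! hc
    have h1 := hV y i
    rw [Finset.sum_eq_zero (fun j _ => if_neg (show ¬ V y i j from hc (toLex ⟨i, j⟩)))] at h1
    have := hMA y i
    rw [← h1] at this
    linarith
  · intro y p p' p'' h1 h2 u1 u2
    have key : ∀ (i i' i'' : Fin n) (j : Fin (N i)) (j' : Fin (N i')) (j'' : Fin (N i'')),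
        (i < i' ∨ (i = i' ∧ (j : ℕ) ≤ j')) → (i' < i'' ∨ (i' = i'' ∧ (j' : ℕ) ≤ j'')) →
        V y i j → V y i'' j'' → V y i' j' := by
      intro i i' i'' j j' j'' h1 h2 u1 u2
      by_cases hR : R y i'
      · rcases h2 with h2 | ⟨rfl, h2⟩
        · obtain ⟨i0, hi0, hc0⟩ := hR
          exact hVfull y i' j' (hclaim y i0 i' i'' hi0 h2 hc0 (hVpos _ _ _ u2))
        · simp only [V, hR, if_true] at u2 ⊢
          omega
      · rcases h1 with h1 | ⟨rfl, h1⟩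
        · exact absurd ⟨i, h1, hVpos _ _ _ u1⟩ hR
        · simp only [V, hR, if_false] at u1 ⊢
          omega
    have conv : ∀ p q : (Σₗ i : Fin n, Fin (N i)), p ≤ q →
        ((ofLex p).1 < (ofLex q).1 ∨
          ((ofLex p).1 = (ofLex q).1 ∧ ((ofLex p).2 : ℕ) ≤ (ofLex q).2)) := by
      rintro ⟨i, j⟩ ⟨i', j'⟩ h
      rcases Sigma.Lex.le_def.mp h with h | ⟨h, h'⟩
      · exact Or.inl h
      · right
        dsimp at h
        subst h
        exact ⟨rfl, h'⟩
    exact key _ _ _ _ _ _ (conv _ _ h1) (conv _ _ h2) u1 u2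
  · intro y φ
    have e1 := Fintype.sum_equiv (toLex : (Σ i : Fin n, Fin (N i)) ≃ (Σₗ i : Fin n, Fin (N i)))
      (fun j => (l j.1 j.2 * if V y j.1 j.2 then E else 1) * φ (x j.1))
      (fun j => (l (ofLex j).1 (ofLex j).2 * if V y (ofLex j).1 (ofLex j).2 then E else 1) *
        φ (x (ofLex j).1)) (fun j => rfl)
    refine Eq.trans ?_ (e1.symm.trans ?_)
    · refine Finset.sum_congr rfl fun j _ => ?_
      congr
    · rw [Fintype.sum_sigma]
      refine Finset.sum_congr rfl fun i _ => ?_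
      dsimp only
      rw [← Finset.sum_mul]
      congr 1
      rw [hMA y i, ← hV y i, ← hlC i, Finset.mul_sum, ← Finset.sum_add_distrib]
      refine Finset.sum_congr rfl fun j _ => ?_
      split_ifs <;> ring

lemma core {T : Type} [Fintype T] (hT : 2 ≤ Fintype.card T) {E a b : ℝ} (hE : 1 < E)
    {B : T → (ℝ → ℝ) → ℝ} {m : ℕ}
    (hB1 : ∀ y, B y (fun _ => 1) = 1) (hB2 : ∀ y, B y (fun _ => -1) = -1)
    {x₁ : Fin m → ℝ} {M₁ : T → Fin m → ℝ} (h₁ : LFeas E a b B x₁ M₁) :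
    ∃ (J : Type) (_ : LinearOrder J) (_ : Fintype J) (z : J → ℝ) (l : J → ℝ) (U : T → J → Prop)
      (_ : ∀ y j, Decidable (U y j)),
      Monotone z ∧ (∀ j, 0 < l j) ∧ (∀ j, ∃ y, ¬ U y j) ∧ (∀ y, ∃ j, U y j) ∧
      (∀ y j j' j'', j ≤ j' → j' ≤ j'' → U y j → U y j'' → U y j') ∧
      (∀ y, ∀ φ : ℝ → ℝ, ConvexOn ℝ Set.univ φ →
        ∑ j, (l j * if U y j then E else 1) * φ (z j) ≤ B y φ) := by
  classical
  obtain ⟨t1, t2, ht⟩ := Fintype.exists_pair_of_one_lt_card (α := T) (by omega)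
  have : Nonempty T := ⟨t1⟩
  obtain ⟨n, x, M, hf, hx, hpos, hno⟩ := exists_good hB1 hB2 h₁
  have hsum := hf.sum_eq hB1 hB2
  rcases n with _ | n
  · refine ⟨Fin 2, inferInstance, inferInstance, fun _ => x 0, fun _ => 1 / (E + 1),
      fun y j => (y = t1 ↔ j = 0), inferInstance, fun _ _ _ => le_rfl, fun _ => by positivity,
      ?_, ?_, ?_, ?_⟩
    · intro j
      by_cases hj : j = 0
      · exact ⟨t2, by simp [hj, ht.symm]⟩
      · exact ⟨t1, by simp [hj]⟩
    · intro y
      by_cases hy : y = t1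
      · exact ⟨0, by simp [hy]⟩
      · exact ⟨1, by simp [hy]⟩
    · intro y j j' j'' h1 h2 u1 u2
      by_cases hy : y = t1
      · simp only [hy, true_iff] at *
        omega
      · simp only [hy, false_iff] at *
        omega
    · intro y φ hφ
      refine le_trans (le_of_eq ?_) (hf.cvx y φ hφ)
      have h1 := hsum y
      simp only [Fin.sum_univ_succ, Fin.sum_univ_zero, Nat.reduceAdd] at h1
      have h2 : M y 0 = 1 := by simpa using h1
      have h3 : E + 1 ≠ 0 := by linarith
      rw [Fin.sum_univ_two]
      by_cases hy : y = t1
      · simp [hy] at h2 ⊢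
        rw [h2]; field_simp
      · simp [hy, h2]
        field_simp; ring
  · have hex : ∀ i, ∃ y y', M y' i = E * M y i := by
      intro i
      obtain ⟨j, hj⟩ := exists_ne i
      exact exch_two hf.range hx hpos hf.dp hno i j hj
    choose lo hi hlohi using hex
    obtain ⟨J, i1, i2, z, l, U, i3, h1, h2, h3, h4, h5, h6⟩ :=
      arrange hE hf.range hx hno (by omega) hsum (fun i => M (lo i) i) (fun i => hpos _ _)
        (fun i y => ⟨by
          have := hf.dp i y (hi i)
          rw [hlohi] at this
          exact le_of_mul_le_mul_left this (by linarith), hf.dp i (lo i) y⟩)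
        (fun i => ⟨lo i, rfl⟩) (fun i => ⟨hi i, hlohi i⟩)
    refine ⟨J, i1, i2, z, l, U, i3, h1, h2, h3, h4, h5, fun y φ hφ => ?_⟩
    rw [h6]
    exact hf.cvx y φ hφ

/-- For `ε > 0`, a finite label set `Y ⊆ ℝ` with `|Y| ≥ 2`, a loss `g`
convex in its first argument and a prior `P`: if `M₁` is an `ε`-DP label randomizer
whose columns are positive multiples of pairwise distinct `{1, e^ε}`-valued vectors,
then there is an `ε`-DP label randomizer `M₂`, again with columns positive multiples of
`{1, e^ε}`-valued vectors, with the same expected output as `M₁` on every input label,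
no larger noisy label loss, such that with its output labels sorted increasingly, every
row's set of `U`-entries (entries equal to `e^ε` times the column minimum) is a nonempty
contiguous set of output indices (pattern `L*U+L*`). -/
theorem stmt_4
    (ε : ℝ) (hε : 0 < ε)
    (Y : Finset ℝ) (hYcard : 2 ≤ Y.card)
    (g : ℝ → ℝ → ℝ)
    (hg : ∀ y ∈ Y, ConvexOn ℝ Set.univ (fun s => g s y))
    (P : ℝ → ℝ) (hP0 : ∀ y ∈ Y, 0 ≤ P y) (hP1 : ∑ y ∈ Y, P y = 1)
    (m₁ : ℕ) (yhat₁ : Fin m₁ → ℝ) (M₁ : ℝ → Fin m₁ → ℝ)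
    (h₁nonneg : ∀ y ∈ Y, ∀ j, 0 ≤ M₁ y j)
    (h₁sum : ∀ y ∈ Y, ∑ j, M₁ y j = 1)
    (h₁dp : ∀ j, ∀ y ∈ Y, ∀ y' ∈ Y, M₁ y' j ≤ Real.exp ε * M₁ y j)
    -- each column of M₁ is a positive multiple of a {1, e^ε}-valued vector,
    -- with these vectors pairwise distinct across columns
    (c₁ : Fin m₁ → ℝ) (w₁ : Fin m₁ → ℝ → ℝ)
    (hc₁ : ∀ j, 0 < c₁ j)
    (hw₁ : ∀ j, ∀ y ∈ Y, w₁ j y = 1 ∨ w₁ j y = Real.exp ε)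
    (hM₁ : ∀ j, ∀ y ∈ Y, M₁ y j = c₁ j * w₁ j y)
    (hw₁distinct : ∀ j j' : Fin m₁, j ≠ j' → ∃ y ∈ Y, w₁ j y ≠ w₁ j' y) :
    ∃ (m₂ : ℕ) (yhat₂ : Fin m₂ → ℝ) (M₂ : ℝ → Fin m₂ → ℝ),
      -- M₂ is a label randomizer on Y
      (∀ y ∈ Y, ∀ i, 0 ≤ M₂ y i) ∧
      (∀ y ∈ Y, ∑ i, M₂ y i = 1) ∧
      -- M₂ is ε-DP
      (∀ i, ∀ y ∈ Y, ∀ y' ∈ Y, M₂ y' i ≤ Real.exp ε * M₂ y i) ∧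
      -- each column of M₂ is a positive multiple of a {1, e^ε}-valued vector
      (∃ (c₂ : Fin m₂ → ℝ) (w₂ : Fin m₂ → ℝ → ℝ),
        (∀ i, 0 < c₂ i) ∧
        (∀ i, ∀ y ∈ Y, w₂ i y = 1 ∨ w₂ i y = Real.exp ε) ∧
        (∀ i, ∀ y ∈ Y, M₂ y i = c₂ i * w₂ i y)) ∧
      -- same expected output as M₁ on every input label
      (∀ y ∈ Y, ∑ i, M₂ y i * yhat₂ i = ∑ j, M₁ y j * yhat₁ j) ∧
      -- the noisy label loss does not increase
      (∑ y ∈ Y, P y * ∑ i, M₂ y i * g (yhat₂ i) y) ≤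
        (∑ y ∈ Y, P y * ∑ j, M₁ y j * g (yhat₁ j) y) ∧
      -- output labels of M₂ are sorted in increasing order
      Monotone yhat₂ ∧
      -- q i is the minimum entry of column i of M₂
      ∃ q : Fin m₂ → ℝ,
        (∀ i, ∃ y ∈ Y, M₂ y i = q i) ∧
        (∀ i, ∀ y ∈ Y, q i ≤ M₂ y i) ∧
        -- every row's set of U-entries is nonempty and contiguous (pattern L*U+L*)
        (∀ y ∈ Y, ∃ i, M₂ y i = Real.exp ε * q i) ∧
        (∀ y ∈ Y, ∀ i i' i'' : Fin m₂, i ≤ i' → i' ≤ i'' →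
          M₂ y i = Real.exp ε * q i → M₂ y i'' = Real.exp ε * q i'' →
          M₂ y i' = Real.exp ε * q i') := by
  classical
  have hE : 1 < Real.exp ε := by rw [Real.one_lt_exp_iff]; exact hε
  let T := {y // y ∈ Y}
  let B : T → (ℝ → ℝ) → ℝ := fun y φ => ∑ j, M₁ y j * φ (yhat₁ j)
  have hB1 : ∀ y, B y (fun _ => 1) = 1 := fun y => by simpa [B] using h₁sum y y.2
  have hB2 : ∀ y, B y (fun _ => -1) = -1 := fun y => by
    simp only [B, mul_neg, mul_one, Finset.sum_neg_distrib, h₁sum y y.2]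
  obtain ⟨a, ha⟩ := (Set.finite_range yhat₁).bddBelow
  obtain ⟨b, hb⟩ := (Set.finite_range yhat₁).bddAbove
  have hf : LFeas (Real.exp ε) a b B yhat₁ (fun (y : T) j => M₁ y j) :=
    ⟨fun i => ⟨ha ⟨i, rfl⟩, hb ⟨i, rfl⟩⟩, fun y i => h₁nonneg y y.2 i,
      fun i y y' => h₁dp i y y.2 y' y'.2, fun y φ _ => le_rfl⟩
  obtain ⟨J, i1, i2, z, l, U, i3, hz, hl, hlow, hhigh, hcont, hcvx⟩ :=
    core (T := T) (by simpa [T] using hYcard) hE hB1 hB2 hf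
  let o : Fin (Fintype.card J) ≃o J := Fintype.orderIsoFinOfCardEq J rfl
  let w : Fin (Fintype.card J) → ℝ → ℝ := fun i y =>
    if h : y ∈ Y then (if U ⟨y, h⟩ (o i) then Real.exp ε else 1) else 1
  have hw : ∀ i, ∀ y, ∀ h : y ∈ Y, w i y = if U ⟨y, h⟩ (o i) then Real.exp ε else 1 :=
    fun i y h => dif_pos h
  have hw1 : ∀ i y, 1 ≤ w i y ∧ w i y ≤ Real.exp ε := by
    intro i y
    simp only [w]
    split_ifs <;> constructor <;> linarith
  have hsum : ∀ y, ∀ h : y ∈ Y, ∀ φ : ℝ → ℝ, ∑ i, (l (o i) * w i y) * φ (z (o i)) =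
      ∑ j, (l j * if U ⟨y, h⟩ j then Real.exp ε else 1) * φ (z j) := by
    intro y h φ
    simp only [hw _ y h]
    exact Equiv.sum_comp o.toEquiv
      (fun j => (l j * if U ⟨y, h⟩ j then Real.exp ε else 1) * φ (z j))
  have hle : ∀ y, ∀ h : y ∈ Y, ∀ φ : ℝ → ℝ, ConvexOn ℝ Set.univ φ →
      ∑ i, (l (o i) * w i y) * φ (z (o i)) ≤ ∑ j, M₁ y j * φ (yhat₁ j) := by
    intro y h φ hφ
    rw [hsum y h]
    exact hcvx ⟨y, h⟩ φ hφ
  have hU : ∀ y, ∀ h : y ∈ Y, ∀ i, l (o i) * w i y = Real.exp ε * l (o i) ↔ U ⟨y, h⟩ (o i) := by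
    intro y h i
    rw [hw i y h]
    have := hl (o i)
    split_ifs with hu
    · simp [hu, mul_comm]
    · simp only [hu, iff_false]
      intro hc
      nlinarith
  refine ⟨Fintype.card J, z ∘ o, fun y i => l (o i) * w i y, ?_, ?_, ?_,
    ⟨fun i => l (o i), w, fun i => hl _, ?_, fun i y _ => rfl⟩, ?_, ?_, hz.comp o.monotone,
    fun i => l (o i), ?_, ?_, ?_, ?_⟩
  · intro y _ i
    exact mul_nonneg (hl _).le (by linarith [(hw1 i y).1])
  · intro y h
    have h1 := hle y h (fun _ => 1) (convexOn_const _ convex_univ)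
    have h2 := hle y h (fun _ => -1) (convexOn_const _ convex_univ)
    simp only [mul_neg, mul_one, Finset.sum_neg_distrib, h₁sum y h] at h1 h2
    linarith
  · intro i y _ y' _
    have h1 := hw1 i y
    have h2 := hw1 i y'
    have h3 : w i y' ≤ Real.exp ε * w i y := by nlinarith
    calc l (o i) * w i y' ≤ l (o i) * (Real.exp ε * w i y) :=
          mul_le_mul_of_nonneg_left h3 (hl _).le
      _ = _ := by ring
  · intro i y h
    rw [hw i y h]
    split_ifs <;> simp
  · intro y h
    have h1 := hle y h (fun s => s) (convexOn_id convex_univ)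
    have h2 := hle y h (fun s => -s) (concaveOn_id convex_univ).neg
    simp only [mul_neg, Finset.sum_neg_distrib] at h1 h2
    exact le_antisymm h1 (by simpa using h2)
  · refine Finset.sum_le_sum fun y h => mul_le_mul_of_nonneg_left ?_ (hP0 y h)
    exact hle y h (fun s => g s y) (hg y h)
  · intro i
    obtain ⟨y, hy⟩ := hlow (o i)
    exact ⟨y, y.2, by dsimp only; rw [hw i y y.2, if_neg hy, mul_one]⟩
  · intro i y _
    nlinarith [hl (o i), (hw1 i y).1]
  · intro y h
    obtain ⟨j, hj⟩ := hhigh ⟨y, h⟩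
    refine ⟨o.symm j, (hU y h _).2 ?_⟩
    rwa [o.apply_symm_apply]
  · intro y h i i' i'' h1 h2 u1 u2
    exact (hU y h _).2 (hcont ⟨y, h⟩ _ _ _ (o.monotone h1) (o.monotone h2) ((hU y h _).1 u1)
      ((hU y h _).1 u2))
end
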